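/- Let ω be an irrational number of bounded type and let l ∈ ℕ. The set of 1-periodic C^l potentials v whose Schrödinger cocycle has positive Lyapunov exponent is not open in the C^l topology: there exists a 1-periodic C^l function v : ℝ → ℝ with L(S_v) > 0 such that for every δ > 0 there is a 1-periodic C^l function w : ℝ → ℝ with ‖w − v‖_{C^l} < δ and L(S_w) = 0. -/

import Mathlib

open Real MeasureTheory Filter

/-- Operator norm of a 2×2 real matrix, acting on Euclidean space. -/
noncomputable def opNorm (A : Matrix (Fin 2) (Fin 2) ℝ) : ℝ :=
  ‖(Matrix.toEuclideanCLM (𝕜 := ℝ) A : EuclideanSpace ℝ (Fin 2) →L[ℝ] EuclideanSpace ℝ (Fin 2))‖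

/-- Iterates of the quasi-periodic cocycle: A^n(x) = A(x+(n-1)ω)⋯A(x+ω)A(x). -/
noncomputable def cocycle (ω : ℝ) (A : ℝ → Matrix (Fin 2) (Fin 2) ℝ) :
    ℕ → ℝ → Matrix (Fin 2) (Fin 2) ℝ
  | 0, _ => 1
  | n + 1, x => A (x + n * ω) * cocycle ω A n x

/-- Finite Lyapunov exponents L_n(A) = (1/n) ∫₀¹ log ‖A^n(x)‖ dx. -/
noncomputable def LEn (ω : ℝ) (A : ℝ → Matrix (Fin 2) (Fin 2) ℝ) (n : ℕ) : ℝ :=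
  (1 / n) * ∫ x in (0:ℝ)..1, Real.log (opNorm (cocycle ω A n x))

/-- The Schrödinger cocycle S_v(x) = [[v(x), -1],[1,0]]. -/
def SchrodingerCocycle (v : ℝ → ℝ) (x : ℝ) : Matrix (Fin 2) (Fin 2) ℝ := !![v x, -1; 1, 0]

/-- The denominators of the continued fraction convergents of ω. -/
noncomputable def cfDen (ω : ℝ) (k : ℕ) : ℝ := (GenContFract.of ω).dens k

/-- Extraction of integer convergents. -/
lemma cf_extract (ω : ℝ) (hω : Irrational ω) :
    ∃ p q : ℕ → ℤ, (∀ k, (q k : ℝ) = cfDen ω k) ∧ (∀ k, 1 ≤ q k) ∧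
      (∀ k, q (k + 1) + q k ≤ q (k + 2)) ∧
      (∀ k, |p k * q (k + 1) - q k * p (k + 1)| = 1) ∧
      (∀ k, |(q k : ℝ) * ω - p k| ≤ 1 / q (k + 1)) := by
  set g := GenContFract.of ω with hg
  have hnt : ∀ n, ¬ g.TerminatedAt n := by
    intro n hn
    have h : g.Terminates := ⟨n, hn⟩
    rw [hg, GenContFract.terminates_iff_rat] at h
    obtain ⟨r, hr⟩ := h
    exact hω ⟨r, hr.symm⟩
  have hs : ∀ n, ∃ z : ℤ, 1 ≤ z ∧ g.s.get? n = some ⟨1, (z : ℝ)⟩ := by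
    intro n
    have h1 := hnt n
    rw [GenContFract.TerminatedAt, Stream'.Seq.TerminatedAt] at h1
    obtain ⟨gp, hgp⟩ := Option.ne_none_iff_exists'.1 h1
    obtain ⟨ha, z, hz⟩ := GenContFract.of_partNum_eq_one_and_exists_int_partDen_eq hgp
    refine ⟨z, ?_, ?_⟩
    · have := GenContFract.of_one_le_get?_partDen (v := ω) (n := n) (b := gp.b)
        (GenContFract.partDen_eq_s_b hgp)
      rw [hz] at this
      exact_mod_cast this
    · rw [hgp]; cases gp; simp_all
  choose z hz1 hz using hs
  have hpq : ∀ n, (∃ p q : ℤ, (p : ℝ) = g.nums n ∧ (q : ℝ) = g.dens n ∧ 1 ≤ q) ∧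
      (∃ p q : ℤ, (p : ℝ) = g.nums (n + 1) ∧ (q : ℝ) = g.dens (n + 1) ∧ 1 ≤ q) := by
    intro n
    induction n with
    | zero =>
      refine ⟨⟨⌊ω⌋, 1, ?_, ?_, le_rfl⟩, ⟨z 0 * ⌊ω⌋ + 1, z 0, ?_, ?_, hz1 0⟩⟩
      · rw [GenContFract.zeroth_num_eq_h, hg, GenContFract.of_h_eq_floor]
      · rw [GenContFract.zeroth_den_eq_one]; norm_num
      · rw [GenContFract.first_num_eq (hz 0), hg, GenContFract.of_h_eq_floor]; push_cast; ring
      · rw [GenContFract.first_den_eq (hz 0)]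
    | succ n ih =>
      refine ⟨ih.2, ?_⟩
      obtain ⟨⟨p, q, hp, hq, hq1⟩, ⟨p', q', hp', hq', hq1'⟩⟩ := ih
      refine ⟨z (n + 1) * p' + p, z (n + 1) * q' + q, ?_, ?_, ?_⟩
      · rw [GenContFract.nums_recurrence (hz (n + 1)) hp.symm hp'.symm]; push_cast; ring
      · rw [GenContFract.dens_recurrence (hz (n + 1)) hq.symm hq'.symm]; push_cast; ring
      · nlinarith [hz1 (n + 1)]
  have h0 := fun n => (hpq n).1
  choose p q hp hq hq1 using h0
  refine ⟨p, q, fun k => hq k, hq1, ?_, ?_, ?_⟩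
  · intro k
    have h := GenContFract.dens_recurrence (hz (k + 1)) (hq k).symm (hq (k + 1)).symm
    rw [← hq] at h
    have h' : q (k + 2) = z (k + 1) * q (k + 1) + q k := by
      have : (q (k + 2) : ℝ) = z (k + 1) * q (k + 1) + q k := by rw [h]; ring
      exact_mod_cast this
    nlinarith [hz1 (k + 1), hq1 (k + 1)]
  · intro k
    have h := SimpContFract.determinant (s := SimpContFract.of ω) (n := k) (hnt k)
    change g.nums k * g.dens (k + 1) - g.dens k * g.nums (k + 1) = _ at h
    rw [← hq, ← hq, ← hp, ← hp] at h
    have h' : p k * q (k + 1) - q k * p (k + 1) = (-1) ^ (k + 1) := by exact_mod_cast h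
    rw [h', abs_pow]; simp
  · intro k
    have h := GenContFract.abs_sub_convs_le (hnt k)
    rw [GenContFract.conv_eq_num_div_den, ← hg, ← hq, ← hq, ← hp] at h
    have hk : (0 : ℝ) < q k := by exact_mod_cast (hq1 k)
    have hk' : (0 : ℝ) < q (k + 1) := by exact_mod_cast (hq1 (k + 1))
    have e : (q k : ℝ) * ω - p k = q k * (ω - p k / q k) := by field_simp
    rw [e, abs_mul, abs_of_pos hk]
    calc (q k : ℝ) * |ω - p k / q k| ≤ q k * (1 / (q k * q (k + 1))) := by gcongr
      _ = _ := by field_simp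

lemma nt_lattice (ω : ℝ) (a b c d : ℤ) (ha : 1 ≤ a) (hb : 1 ≤ b)
    (hdet : |c * b - a * d| = 1)
    (hs : ((a : ℝ) * ω - c) * ((b : ℝ) * ω - d) < 0)
    (j : ℤ) (hj : 1 ≤ j) (hjb : j < b) (m : ℤ) :
    |(a : ℝ) * ω - c| ≤ |(j : ℝ) * ω - m| := by
  obtain ⟨x, y, hx, hy⟩ : ∃ x y : ℤ, j = x * a + y * b ∧ m = x * c + y * d := by
    rcases (abs_eq (by norm_num : (0 : ℤ) ≤ 1)).1 hdet with h | h
    · refine ⟨m * b - j * d, j * c - m * a, ?_, ?_⟩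
      · linear_combination (-j) * h
      · linear_combination (-m) * h
    · refine ⟨-(m * b - j * d), -(j * c - m * a), ?_, ?_⟩
      · linear_combination (j) * h
      · linear_combination (m) * h
  have e : (j : ℝ) * ω - m = x * (a * ω - c) + y * (b * ω - d) := by
    rw [hx, hy]; push_cast; ring
  set E := (a : ℝ) * ω - c
  set E' := (b : ℝ) * ω - d
  have hx0 : x ≠ 0 := by
    rintro rfl
    have : 0 < y := by nlinarith
    nlinarith
  have hxy : x * y ≤ 0 := by
    by_contra hcon
    push Not at hcon
    rcases lt_or_gt_of_ne hx0 with h | h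
    · have : y < 0 := by nlinarith
      nlinarith
    · have : 0 < y := by nlinarith
      nlinarith
  have hx1 : (1 : ℝ) ≤ x ^ 2 := by
    have : 1 ≤ x ^ 2 := by nlinarith [sq_abs x, Int.one_le_abs hx0]
    exact_mod_cast this
  have hxy' : (x : ℝ) * y ≤ 0 := by exact_mod_cast hxy
  rw [e]
  apply sq_le_sq.1
  have h1 : 0 ≤ (x * y : ℝ) * (E * E') := mul_nonneg_of_nonpos_of_nonpos hxy' hs.le
  have h2 : 0 ≤ (y * E' : ℝ) ^ 2 := sq_nonneg _
  have h3 : 0 ≤ (x ^ 2 - 1 : ℝ) * E ^ 2 := mul_nonneg (by linarith) (sq_nonneg _)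
  nlinarith

lemma nt_main (ω : ℝ) (hω : Irrational ω) (M : ℝ) (hM : 1 ≤ M)
    (hbt : ∀ k : ℕ, cfDen ω (k + 1) ≤ M * cfDen ω k) :
    ∃ M' : ℝ, 1 ≤ M' ∧ ∀ X : ℝ, 1 ≤ X → ∃ R : ℕ, ∃ ℓ : ℝ, X ≤ R ∧ (R : ℝ) ≤ M' * X ∧ 0 < ℓ ∧
      (∀ j : ℕ, 1 ≤ j → j ≤ R → ∀ m : ℤ, ℓ ≤ |(j : ℝ) * ω - m|) ∧
      1 / 2 + 1 / (2 * (2 * M + 1)) ≤ (R + 1) * ℓ ∧ (R + 1) * ℓ ≤ 1 := by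
  obtain ⟨p, q, hq, hq1, hrec, hdet, herr⟩ := cf_extract ω hω
  have hqM : ∀ k, (q (k + 1) : ℝ) ≤ M * q k := by intro k; rw [hq, hq]; exact hbt k
  have hqpos : ∀ k, (1 : ℝ) ≤ q k := by intro k; exact_mod_cast hq1 k
  have hrecR : ∀ k, (q (k + 1) : ℝ) + q k ≤ q (k + 2) := by intro k; exact_mod_cast hrec k
  have hE0 : ∀ k, (q k : ℝ) * ω - p k ≠ 0 := by
    intro k h
    apply hω
    refine ⟨(p k : ℚ) / q k, ?_⟩
    have := hqpos k
    push_cast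
    field_simp
    linarith
  have hdetE : ∀ k, |(q (k + 1) : ℝ) * (q k * ω - p k) - q k * (q (k + 1) * ω - p (k + 1))| = 1 := by
    intro k
    have h : |((p k * q (k + 1) - q k * p (k + 1) : ℤ) : ℝ)| = 1 := by exact_mod_cast hdet k
    rw [← h, ← abs_neg]; congr 1; push_cast; ring
  have herr' : ∀ k, (q (k + 1) : ℝ) * |(q k : ℝ) * ω - p k| ≤ 1 := by
    intro k
    have h := herr k
    rw [le_div_iff₀ (by linarith [hqpos (k + 1)])] at h
    linarith
  have hsign : ∀ k, ((q k : ℝ) * ω - p k) * ((q (k + 1) : ℝ) * ω - p (k + 1)) < 0 := by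
    intro k
    by_contra hcon
    push Not at hcon
    have h1 := hdetE k
    have h2 := herr' k
    have h3 := herr' (k + 1)
    have h4 := hE0 k
    have h5 := hE0 (k + 1)
    have a1 := hqpos k
    have a2 := hqpos (k + 1)
    have a3 := hrecR k
    set E := (q k : ℝ) * ω - p k
    set E' := (q (k + 1) : ℝ) * ω - p (k + 1)
    have h6 : (q k : ℝ) * |E'| ≤ 1 := by
      have : (q k : ℝ) * |E'| ≤ q (k + 1 + 1) * |E'| := by
        apply mul_le_mul_of_nonneg_right _ (abs_nonneg _)
        have : (q (k + 1 + 1) : ℝ) = q (k + 2) := rfl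
        linarith
      linarith
    have h7 : 0 < |E| := abs_pos.2 h4
    have h8 : 0 < |E'| := abs_pos.2 h5
    have h9 : abs (q (k + 1) * E - q k * E') = abs (q (k + 1) * abs E - q k * abs E') := by
      rcases lt_or_gt_of_ne h4 with h | h
      · have : E' < 0 := by
          rcases lt_or_gt_of_ne h5 with h' | h'
          · exact h'
          · nlinarith
        rw [abs_of_neg h, abs_of_neg this, ← abs_neg]; congr 1; ring
      · have : 0 < E' := by
          rcases lt_or_gt_of_ne h5 with h' | h'
          · nlinarith
          · exact h'
        rw [abs_of_pos h, abs_of_pos this]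
    rw [h9] at h1
    have h10 : abs (q (k + 1) * abs E - q k * abs E') < 1 := by
      rw [abs_lt]
      constructor <;> nlinarith
    linarith
  have hsum : ∀ k, (q (k + 1) : ℝ) * |(q k : ℝ) * ω - p k| +
      q k * |(q (k + 1) : ℝ) * ω - p (k + 1)| = 1 := by
    intro k
    have h1 := hdetE k
    have hs := hsign k
    have a1 := hqpos k
    have a2 := hqpos (k + 1)
    set E := (q k : ℝ) * ω - p k
    set E' := (q (k + 1) : ℝ) * ω - p (k + 1)
    rcases lt_or_gt_of_ne (hE0 k) with h | h
    · have h' : 0 < E' := by by_contra hc; push Not at hc; nlinarith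
      rw [abs_of_neg (by nlinarith)] at h1
      rw [abs_of_neg h, abs_of_pos h']; linarith
    · have h' : E' < 0 := by by_contra hc; push Not at hc; nlinarith
      rw [abs_of_pos (by nlinarith)] at h1
      rw [abs_of_pos h, abs_of_neg h']; linarith
  have hgrow : ∀ k : ℕ, (k : ℝ) ≤ q (k + 1) := by
    intro k
    induction k with
    | zero => have := hqpos 1; rw [Nat.cast_zero, zero_add]; linarith
    | succ k ih => push_cast; have := hrecR k; have := hqpos k; simp only [add_assoc] at *; norm_num at *; linarith
  refine ⟨2 * M ^ 2, by nlinarith, fun X hX => ?_⟩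
  -- least k with q (k+2) ≥ X + 1
  have hex : ∃ k : ℕ, X + 1 ≤ q (k + 2) := by
    obtain ⟨k, hk⟩ := exists_nat_ge (X + 1)
    refine ⟨k, ?_⟩
    have := hgrow (k + 1)
    push_cast at this
    have e : q (k + 1 + 1) = q (k + 2) := rfl
    rw [e] at this; linarith
  classical
  obtain ⟨k, hk, hkmin⟩ : ∃ k : ℕ, X + 1 ≤ q (k + 2) ∧ (q (k + 2) : ℝ) ≤ 2 * M ^ 2 * X := by
    refine ⟨Nat.find hex, Nat.find_spec hex, ?_⟩
    rcases Nat.eq_zero_or_pos (Nat.find hex) with h | h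
    · rw [h]
      have h0 : (q 0 : ℝ) = 1 := by
        rw [hq]; exact GenContFract.zeroth_den_eq_one
      have h1 := hqM 0
      have h2 := hqM 1
      simp only [zero_add] at *
      norm_num at h2
      nlinarith
    · have h1 := Nat.find_min hex (m := Nat.find hex - 1) (by omega)
      have e : Nat.find hex - 1 + 2 = Nat.find hex + 1 := by omega
      rw [e] at h1
      push Not at h1
      have h2 := hqM (Nat.find hex + 1)
      have e2 : Nat.find hex + 1 + 1 = Nat.find hex + 2 := by omega
      rw [e2] at h2
      have h3 : M * (q (Nat.find hex + 1) : ℝ) ≤ M * (2 * X) := by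
        apply mul_le_mul_of_nonneg_left <;> linarith
      have h4 : M * (2 * X) ≤ M * (M * (2 * X)) := by
        have : 0 ≤ M * (2 * X) := by positivity
        nlinarith
      nlinarith
  have hRn : ((q (k + 2)).toNat : ℤ) = q (k + 2) := Int.toNat_of_nonneg (by linarith [hq1 (k + 2)])
  have hR1 : 1 ≤ (q (k + 2)).toNat := by have := hq1 (k + 2); omega
  have hRr : (((q (k + 2)).toNat - 1 : ℕ) : ℝ) = q (k + 2) - 1 := by
    rw [Nat.cast_sub hR1]
    have : (((q (k + 2)).toNat : ℤ) : ℝ) = q (k + 2) := by rw [hRn]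
    push_cast at this ⊢
    rw [this]
  refine ⟨(q (k + 2)).toNat - 1, |(q (k + 1) : ℝ) * ω - p (k + 1)|, ?_, ?_, abs_pos.2 (hE0 _), ?_, ?_, ?_⟩
  · rw [hRr]; linarith
  · rw [hRr]; linarith
  · intro j hj1 hjR m
    have := nt_lattice ω (q (k + 1)) (q (k + 2)) (p (k + 1)) (p (k + 2)) (hq1 _) (hq1 _) (hdet (k + 1))
      (hsign (k + 1)) j (by exact_mod_cast hj1) (by omega) m
    exact_mod_cast this
  · rw [hRr]
    have h1 := hsum (k + 1)
    have h2 := herr' (k + 2)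
    have e1 : k + 1 + 1 = k + 2 := rfl
    have e2 : k + 2 + 1 = k + 3 := rfl
    rw [e1] at h1
    rw [e2] at h2
    have h3 := hrecR (k + 1)
    rw [show k + 1 + 1 = k + 2 from rfl, show k + 1 + 2 = k + 3 from rfl] at h3
    have h4 := hrecR k
    have h5 := hqM k
    set e := |(q (k + 2) : ℝ) * ω - p (k + 2)|
    have he : 0 ≤ e := abs_nonneg _
    have h6 : (q (k + 1) : ℝ) * e ≤ M / (2 * M + 1) := by
      rw [le_div_iff₀ (by linarith)]
      have a1 := hqpos (k + 1)
      -- (2 M + 1) q_{k+1} ≤ M q_{k+3}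
      have : (q (k + 1) : ℝ) * (2 * M + 1) ≤ M * q (k + 3) := by nlinarith
      nlinarith
    have h7 : 1 / 2 + 1 / (2 * (2 * M + 1)) = 1 - M / (2 * M + 1) := by
      field_simp; ring
    rw [h7]
    linarith
  · rw [hRr]
    have h1 := herr' (k + 1)
    have e1 : k + 1 + 1 = k + 2 := rfl
    rw [e1] at h1
    linarith

/-- `g` is `C^l` with `|g^(m)| ≤ C^m Z` pointwise, for `m ≤ l`. -/
def Dom (l : ℕ) (C : ℝ) (g Z : ℝ → ℝ) : Prop :=
  ContDiff ℝ l g ∧ ∀ m ≤ l, ∀ x, |iteratedDeriv m g x| ≤ C ^ m * Z x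

namespace Dom

variable {l : ℕ} {C C' : ℝ} {g g' Z Z' : ℝ → ℝ}

lemma abs_le (h : Dom l C g Z) (x : ℝ) : |g x| ≤ Z x := by
  simpa using h.2 0 (Nat.zero_le _) x

lemma nonneg (h : Dom l C g Z) (x : ℝ) : 0 ≤ Z x := (abs_nonneg _).trans (h.abs_le x)

lemma mono (h : Dom l C g Z) (hC : 0 ≤ C) (hCC : C ≤ C') (hZ : ∀ x, Z x ≤ Z' x) :
    Dom l C' g Z' := by
  refine ⟨h.1, fun m hm x => (h.2 m hm x).trans ?_⟩
  have := h.nonneg x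
  have := hZ x
  have : 0 ≤ C' := hC.trans hCC
  gcongr

lemma add (h : Dom l C g Z) (h' : Dom l C g' Z') :
    Dom l C (fun x => g x + g' x) (fun x => Z x + Z' x) := by
  refine ⟨h.1.add h'.1, fun m hm x => ?_⟩
  have hm' : (m : WithTop ℕ∞) ≤ l := by exact_mod_cast hm
  have e : iteratedDeriv m (fun x => g x + g' x) x = iteratedDeriv m g x + iteratedDeriv m g' x :=
    iteratedDeriv_add (h.1.of_le hm').contDiffAt (h'.1.of_le hm').contDiffAt
  rw [e, mul_add]
  exact (abs_add_le _ _).trans (add_le_add (h.2 m hm x) (h'.2 m hm x))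

lemma neg (h : Dom l C g Z) : Dom l C (fun x => - g x) Z := by
  refine ⟨h.1.neg, fun m hm x => ?_⟩
  have e : iteratedDeriv m (fun x => - g x) x = - iteratedDeriv m g x := iteratedDeriv_fun_neg m g x
  rw [e, abs_neg]; exact h.2 m hm x

lemma const (hC : 0 ≤ C) (c : ℝ) : Dom l C (fun _ => c) (fun _ => |c|) := by
  refine ⟨contDiff_const, fun m hm x => ?_⟩
  rw [iteratedDeriv_const]
  split_ifs with h
  · subst h; simp
  · simp; positivity

lemma shift (h : Dom l C g Z) (a : ℝ) : Dom l C (fun x => g (x + a)) (fun x => Z (x + a)) := by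
  refine ⟨h.1.comp (contDiff_id.add contDiff_const), fun m hm x => ?_⟩
  rw [iteratedDeriv_comp_add_const]
  exact h.2 m hm _

lemma mul (hC : 0 ≤ C) (_hC' : 0 ≤ C') (h : Dom l C g Z) (h' : Dom l C' g' Z') :
    Dom l (C + C') (fun x => g x * g' x) (fun x => Z x * Z' x) := by
  refine ⟨h.1.mul h'.1, fun m hm x => ?_⟩
  have hm' : (m : WithTop ℕ∞) ≤ l := by exact_mod_cast hm
  have e : iteratedDeriv m (fun x => g x * g' x) x = _ :=
    iteratedDeriv_mul (h.1.of_le hm').contDiffAt (h'.1.of_le hm').contDiffAt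
  rw [e, add_pow, Finset.sum_mul]
  refine (Finset.abs_sum_le_sum_abs _ _).trans (Finset.sum_le_sum fun i hi => ?_)
  have him : i ≤ m := Nat.lt_succ_iff.1 (Finset.mem_range.1 hi)
  have h1 := h.2 i (him.trans hm) x
  have h2 := h'.2 (m - i) ((Nat.sub_le _ _).trans hm) x
  have := h.nonneg x
  have := h'.nonneg x
  rw [abs_mul, abs_mul, Nat.abs_cast]
  calc (m.choose i : ℝ) * |iteratedDeriv i g x| * |iteratedDeriv (m - i) g' x|
      ≤ (m.choose i : ℝ) * (C ^ i * Z x) * (C' ^ (m - i) * Z' x) := by gcongr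
    _ = _ := by ring

lemma congr (h : Dom l C g Z) (hg : ∀ x, g' x = g x) (hZ : ∀ x, Z' x = Z x) : Dom l C g' Z' := by
  have e1 : g' = g := funext hg
  have e2 : Z' = Z := funext hZ
  rw [e1, e2]; exact h

lemma sum {G Y : ℕ → ℝ → ℝ} (hC : 0 ≤ C) (s : Finset ℕ)
    (h : ∀ i ∈ s, Dom l C (G i) (Y i)) :
    Dom l C (fun x => ∑ i ∈ s, G i x) (fun x => ∑ i ∈ s, Y i x) := by
  classical
  induction s using Finset.induction_on with
  | empty => simpa using const (l := l) hC 0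
  | insert a s ha ih =>
    refine ((h a (Finset.mem_insert_self _ _)).add
      (ih fun i hi => h i (Finset.mem_insert_of_mem hi))).congr ?_ ?_ <;>
    · intro x; rw [Finset.sum_insert ha]

lemma prod {G Y : ℕ → ℝ → ℝ} (hC : 0 ≤ C) (n : ℕ)
    (h : ∀ i < n, Dom l C (G i) (Y i)) :
    Dom l (n * C) (fun x => ∏ i ∈ Finset.range n, G i x) (fun x => ∏ i ∈ Finset.range n, Y i x) := by
  induction n with
  | zero => simpa using const (l := l) le_rfl 1
  | succ n ih =>
    have h1 := ih fun i hi => h i (hi.trans (Nat.lt_succ_self n))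
    have h2 := h1.mul (by positivity) hC (h n (Nat.lt_succ_self n))
    have h3 := h2.mono (C' := (n + 1 : ℕ) * C) (by positivity) (by push_cast; linarith) (fun x => le_rfl)
    refine h3.congr ?_ ?_ <;>
    · intro x; rw [Finset.prod_range_succ]

lemma inv (hC : 0 ≤ C) (h : Dom l C g g) (hpos : ∀ x, 0 < g x) :
    Dom l (2 ^ l * C) (fun x => 1 / g x) (fun x => 1 / g x) := by
  have hcd : ContDiff ℝ l (fun x => 1 / g x) := contDiff_const.div h.1 fun x => (hpos x).ne'
  refine ⟨hcd, fun m => ?_⟩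
  induction m using Nat.strong_induction_on with
  | _ m ih =>
  intro hm x
  have hgx := hpos x
  rcases Nat.eq_zero_or_pos m with h0 | h0
  · subst h0; simp [abs_of_pos hgx]
  have hm' : (m : WithTop ℕ∞) ≤ l := by exact_mod_cast hm
  have e : iteratedDeriv m (g * fun x => 1 / g x) x = _ :=
    iteratedDeriv_mul (h.1.of_le hm').contDiffAt (hcd.of_le hm').contDiffAt
  have e0 : (g * fun x => 1 / g x) = fun _ => (1 : ℝ) := by
    funext y; simp [(hpos y).ne']
  rw [e0, iteratedDeriv_const, if_neg h0.ne', Finset.sum_range_succ'] at e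
  simp only [Nat.choose_zero_right, Nat.cast_one, one_mul, iteratedDeriv_zero, Nat.sub_zero] at e
  set K := 2 ^ l * C with hK
  have hK0 : 0 ≤ K := by positivity
  have key : |g x * iteratedDeriv m (fun x => 1 / g x) x| ≤ K ^ m := by
    have e2 : g x * iteratedDeriv m (fun x => 1 / g x) x = - ∑ k ∈ Finset.range m,
      ↑(m.choose (k + 1)) * iteratedDeriv (k + 1) g x *
        iteratedDeriv (m - (k + 1)) (fun x => 1 / g x) x := by linarith
    rw [e2, abs_neg]
    have hb : ∀ k ∈ Finset.range m, abs (↑(m.choose (k + 1)) * iteratedDeriv (k + 1) g x *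
        iteratedDeriv (m - (k + 1)) (fun x => 1 / g x) x) ≤
        (m.choose (k + 1) : ℝ) * (C ^ m * 2 ^ (l * (m - 1))) := by
      intro k hk
      have hk' := Finset.mem_range.1 hk
      have h1 := h.2 (k + 1) (by omega) x
      have h2 := ih (m - (k + 1)) (by omega) (by omega) x
      rw [abs_mul, abs_mul, Nat.abs_cast, mul_assoc]
      refine mul_le_mul_of_nonneg_left ?_ (Nat.cast_nonneg _)
      calc |iteratedDeriv (k + 1) g x| * |iteratedDeriv (m - (k + 1)) (fun x => 1 / g x) x|
          ≤ (C ^ (k + 1) * g x) * (K ^ (m - (k + 1)) * (1 / g x)) := by gcongr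
        _ = C ^ (k + 1) * K ^ (m - (k + 1)) := by field_simp
        _ = C ^ (k + 1) * C ^ (m - (k + 1)) * 2 ^ (l * (m - (k + 1))) := by
            rw [hK, mul_pow, ← pow_mul]; ring
        _ = C ^ m * 2 ^ (l * (m - (k + 1))) := by
            rw [← pow_add]; congr 2; omega
        _ ≤ C ^ m * 2 ^ (l * (m - 1)) := by
            gcongr
            · norm_num
            · omega
    refine (Finset.abs_sum_le_sum_abs _ _).trans ((Finset.sum_le_sum hb).trans ?_)
    rw [← Finset.sum_mul]
    have hch : ∑ k ∈ Finset.range m, (m.choose (k + 1) : ℝ) ≤ 2 ^ l := by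
      have h1 : ∑ k ∈ Finset.range m, m.choose (k + 1) ≤ 2 ^ m := by
        rw [← Nat.sum_range_choose, Finset.sum_range_succ' _ m]; omega
      calc ∑ k ∈ Finset.range m, (m.choose (k + 1) : ℝ) ≤ 2 ^ m := by exact_mod_cast h1
        _ ≤ 2 ^ l := by gcongr; norm_num
    calc _ ≤ (2 : ℝ) ^ l * (C ^ m * 2 ^ (l * (m - 1))) := by gcongr
      _ = K ^ m := by
        rw [hK, mul_pow, ← pow_mul]
        have : l * m = l + l * (m - 1) := by
          obtain ⟨m', rfl⟩ : ∃ m', m = m' + 1 := ⟨m - 1, by omega⟩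
          simp; ring
        rw [this, pow_add]; ring
  rw [abs_mul, abs_of_pos hgx] at key
  rw [mul_one_div, le_div_iff₀ hgx]; linarith

/-- Exponentials of bump functions. -/
lemma exp_bump {χ I : ℝ → ℝ} {c κ : ℝ} (hc : 0 ≤ c) (hκ : 0 ≤ κ) (h : Dom l c χ I)
    (hI : ∀ x, I x = 0 ∨ I x = 1) :
    ContDiff ℝ l (fun x => Real.exp (-κ * χ x)) ∧ ∀ m, m ≤ l → ∀ x,
      |iteratedDeriv m (fun x => Real.exp (-κ * χ x)) x| ≤
        (2 ^ l * c * (1 + κ)) ^ m * Real.exp (-κ * χ x) * (if m = 0 then 1 else I x) := by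
  have hcd : ContDiff ℝ l (fun x => Real.exp (-κ * χ x)) := (contDiff_const.mul h.1).exp
  refine ⟨hcd, fun m => ?_⟩
  induction m using Nat.strong_induction_on with
  | _ m ih =>
  intro hm x
  rcases m with _ | m
  · simp
  set K := 2 ^ l * c * (1 + κ) with hK
  have hK0 : 0 ≤ K := by positivity
  have hI0 : 0 ≤ I x := by rcases hI x with h | h <;> rw [h]; norm_num
  have hI1 : I x ≤ 1 := by rcases hI x with h | h <;> rw [h]; norm_num
  have hm1 : ((m : WithTop ℕ∞) + 1) ≤ l := by exact_mod_cast hm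
  have hmm : (m : WithTop ℕ∞) ≤ l := by exact_mod_cast (by omega : m ≤ l)
  have hd : ContDiff ℝ m (deriv χ) := (contDiff_succ_iff_deriv.1 (h.1.of_le hm1)).2.2
  have hdiff : Differentiable ℝ χ := (h.1.of_le hm1).differentiable (by simp)
  have e1 : deriv (fun x => Real.exp (-κ * χ x)) =
      ((fun x => -κ * deriv χ x) * fun x => Real.exp (-κ * χ x)) := by
    funext y
    have h1 : HasDerivAt χ (deriv χ y) y := (hdiff y).hasDerivAt
    have h2 := ((h1.const_mul (-κ)).exp).deriv
    rw [h2]; simp only [Pi.mul_apply]; ring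
  rw [iteratedDeriv_succ', e1, iteratedDeriv_mul (contDiff_const.mul hd).contDiffAt
    (hcd.of_le hmm).contDiffAt]
  have hcK : c ≤ K := by
    have : (1 : ℝ) ≤ 2 ^ l := one_le_pow₀ (by norm_num)
    have h2 : 1 * c * 1 ≤ K := by rw [hK]; gcongr; linarith
    linarith
  have hb : ∀ i ∈ Finset.range (m + 1), abs ((m.choose i : ℝ) *
      iteratedDeriv i (fun x => -κ * deriv χ x) x *
      iteratedDeriv (m - i) (fun x => Real.exp (-κ * χ x)) x) ≤
      (m.choose i : ℝ) * (κ * c * K ^ m * Real.exp (-κ * χ x) * I x) := by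
    intro i hi
    have hi' := Finset.mem_range.1 hi
    have him : i ≤ m := by omega
    rw [abs_mul, abs_mul, Nat.abs_cast, mul_assoc]
    refine mul_le_mul_of_nonneg_left ?_ (Nat.cast_nonneg _)
    have e2 : iteratedDeriv i (fun x => -κ * deriv χ x) x = -κ * iteratedDeriv (i + 1) χ x := by
      rw [iteratedDeriv_succ', iteratedDeriv_const_mul_field]
    have h1 := h.2 (i + 1) (by omega) x
    have h2 : |iteratedDeriv (m - i) (fun x => Real.exp (-κ * χ x)) x| ≤
        K ^ (m - i) * Real.exp (-κ * χ x) := by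
      refine (ih (m - i) (by omega) (by omega) x).trans ?_
      refine mul_le_of_le_one_right (by positivity) ?_
      split_ifs
      · exact le_rfl
      · exact hI1
    rw [e2, abs_mul, abs_neg, abs_of_nonneg hκ]
    calc κ * |iteratedDeriv (i + 1) χ x| * |iteratedDeriv (m - i) (fun x => Real.exp (-κ * χ x)) x|
        ≤ κ * (c ^ (i + 1) * I x) * (K ^ (m - i) * Real.exp (-κ * χ x)) := by gcongr
      _ = κ * c * (c ^ i * K ^ (m - i)) * Real.exp (-κ * χ x) * I x := by ring
      _ ≤ κ * c * (K ^ i * K ^ (m - i)) * Real.exp (-κ * χ x) * I x := by gcongr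
      _ = _ := by rw [← pow_add]; congr 4; omega
  refine (Finset.abs_sum_le_sum_abs _ _).trans ((Finset.sum_le_sum hb).trans ?_)
  rw [← Finset.sum_mul]
  have hch : ∑ i ∈ Finset.range (m + 1), (m.choose i : ℝ) ≤ 2 ^ l := by
    have h1 := Nat.sum_range_choose m
    calc ∑ i ∈ Finset.range (m + 1), (m.choose i : ℝ) = 2 ^ m := by exact_mod_cast h1
      _ ≤ 2 ^ l := by
        gcongr
        · norm_num
        · omega
  rw [if_neg (Nat.succ_ne_zero m)]
  calc _ ≤ (2 : ℝ) ^ l * (κ * c * K ^ m * Real.exp (-κ * χ x) * I x) := by gcongr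
    _ = (2 ^ l * c * κ) * K ^ m * Real.exp (-κ * χ x) * I x := by ring
    _ ≤ K * K ^ m * Real.exp (-κ * χ x) * I x := by
        have : 2 ^ l * c * κ ≤ K := by rw [hK]; gcongr; linarith
        gcongr
    _ = _ := by ring

lemma theta {χ I : ℝ → ℝ} {c κ : ℝ} (hc : 0 ≤ c) (hκ : 0 ≤ κ) (h : Dom l c χ I)
    (hI : ∀ x, I x = 0 ∨ I x = 1) :
    Dom l (2 ^ l * c * (1 + κ)) (fun x => Real.exp (-κ * χ x)) (fun x => Real.exp (-κ * χ x)) := by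
  obtain ⟨h1, h2⟩ := exp_bump hc hκ h hI
  refine ⟨h1, fun m hm x => (h2 m hm x).trans ?_⟩
  refine mul_le_of_le_one_right (by positivity) ?_
  split_ifs
  · exact le_rfl
  · rcases hI x with h | h <;> rw [h]; norm_num

lemma one_sub_theta {χ I : ℝ → ℝ} {c κ : ℝ} (hc : 0 ≤ c) (hκ : 0 ≤ κ) (h : Dom l c χ I)
    (hI : ∀ x, I x = 0 ∨ I x = 1) (hχ : ∀ x, 0 ≤ χ x) :
    Dom l (2 ^ l * c * (1 + κ)) (fun x => 1 - Real.exp (-κ * χ x)) I := by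
  obtain ⟨h1, h2⟩ := exp_bump hc hκ h hI
  have hle : ∀ x, Real.exp (-κ * χ x) ≤ 1 := fun x => by
    rw [Real.exp_le_one_iff]; have := mul_nonneg hκ (hχ x); linarith
  refine ⟨contDiff_const.sub h1, fun m hm x => ?_⟩
  rcases Nat.eq_zero_or_pos m with h0 | h0
  · subst h0
    simp only [iteratedDeriv_zero, pow_zero, one_mul]
    rw [abs_of_nonneg (by linarith [hle x])]
    rcases hI x with h' | h'
    · have h3 := h.abs_le x
      rw [h'] at h3
      have : χ x = 0 := abs_eq_zero.1 (le_antisymm h3 (abs_nonneg _))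
      rw [this, h']; simp
    · rw [h']; linarith [Real.exp_pos (-κ * χ x)]
  · have hI0 : 0 ≤ I x := by rcases hI x with h | h <;> rw [h]; norm_num
    rw [iteratedDeriv_const_sub h0, iteratedDeriv_neg, abs_neg]
    refine (h2 m hm x).trans ?_
    rw [if_neg h0.ne']
    gcongr
    exact mul_le_of_le_one_right (by positivity) (hle x)

lemma interp {θ ρ : ℝ → ℝ} {c c' : ℝ} (hc : 0 ≤ c) (hc' : 0 ≤ c') (h : Dom l c θ θ)
    (h' : Dom l c' ρ ρ) (hθ : ∀ x, θ x ≤ 1) (hρ : ∀ x, ρ x ≤ 1) :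
    Dom l (3 * (c + c')) (fun x => θ x + (1 - θ x) * ρ x) (fun x => θ x + (1 - θ x) * ρ x) := by
  have h1 := (h.mono hc (by linarith : c ≤ c + c') fun x => le_rfl).add
    (h'.mono hc' (by linarith : c' ≤ c + c') fun x => le_rfl)
  have h2 := h1.add (h.mul hc hc' h').neg
  refine ⟨?_, ?_⟩
  · exact h.1.add ((contDiff_const.sub h.1).mul h'.1)
  intro m hm x
  have t0 := h.nonneg x
  have r0 := h'.nonneg x
  have t1 := hθ x
  have r1 := hρ x
  have hpos : 0 ≤ θ x + (1 - θ x) * ρ x := by nlinarith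
  rcases Nat.eq_zero_or_pos m with h0 | h0
  · subst h0; simp [abs_of_nonneg hpos]
  have e : (fun x => θ x + (1 - θ x) * ρ x) = (fun x => θ x + ρ x + - (θ x * ρ x)) := by
    funext y; ring
  have h3 := h2.2 m hm x
  rw [e]
  refine h3.trans ?_
  have hb : θ x + ρ x + θ x * ρ x ≤ 3 * (θ x + ρ x + -(θ x * ρ x)) := by
    nlinarith [mul_nonneg t0 (sub_nonneg.2 r1), mul_nonneg r0 (sub_nonneg.2 t1)]
  have hq : 0 ≤ θ x + ρ x + -(θ x * ρ x) := by nlinarith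
  calc (c + c') ^ m * (θ x + ρ x + θ x * ρ x) ≤ (c + c') ^ m * (3 ^ 1 * (θ x + ρ x + -(θ x * ρ x))) := by
        rw [pow_one]; gcongr
    _ ≤ (c + c') ^ m * (3 ^ m * (θ x + ρ x + -(θ x * ρ x))) := by
        gcongr
        · norm_num
        · omega
    _ = _ := by rw [mul_pow]; ring

end Dom

/-- Indicator of the `r`-neighbourhood of the integers. -/
noncomputable def nbInd (r : ℝ) (x : ℝ) : ℝ := if |x - round x| ≤ r then 1 else 0

lemma bump_exists (l : ℕ) (a b : ℝ) (ha : 0 < a) (hab : a < b) (hb : b < 1 / 2) :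
    ∃ B : ℝ, 1 ≤ B ∧ ∀ ℓ : ℝ, 0 < ℓ → ℓ ≤ 1 → ∃ χ : ℝ → ℝ, Function.Periodic χ 1 ∧
      (∀ x, 0 ≤ χ x) ∧ (∀ x, χ x ≤ 1) ∧ Dom l (B / ℓ) χ (nbInd (b * ℓ)) ∧
      (∀ x : ℝ, |x - round x| ≤ a * ℓ → χ x = 1) ∧
      2 * a * ℓ ≤ ∫ x in (0:ℝ)..1, χ x ∧ ∫ x in (0:ℝ)..1, χ x ≤ ℓ := by
  let ψ : ContDiffBump (0 : ℝ) := ⟨a, b, ha, hab⟩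
  have hψsm : ∀ n : ℕ, ContDiff ℝ n ψ := fun n => ψ.contDiff
  have hψ0 : ∀ y, b ≤ |y| → ψ y = 0 := by
    intro y hy
    apply ψ.zero_of_le_dist
    simpa [dist_zero_right] using hy
  have hψ1 : ∀ y, |y| ≤ a → ψ y = 1 := by
    intro y hy
    apply ψ.one_of_mem_closedBall
    simpa [mem_closedBall_zero_iff] using hy
  have hbd : ∀ m : ℕ, ∃ K : ℝ, ∀ y, |iteratedDeriv m ψ y| ≤ K := by
    intro m
    have hc : Continuous (iteratedDeriv m ψ) := (hψsm m).continuous_iteratedDeriv m le_rfl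
    have hs : HasCompactSupport (iteratedDeriv m ψ) := by
      have h1 : HasCompactSupport (iteratedFDeriv ℝ m ψ) := ψ.hasCompactSupport.iteratedFDeriv m
      exact h1.comp_left (g := fun T : ContinuousMultilinearMap ℝ (fun _ : Fin m => ℝ) ℝ =>
        T (fun _ => 1)) (by simp)
    obtain ⟨K, hK⟩ := hc.bounded_above_of_compact_support hs
    exact ⟨K, fun y => by simpa using hK y⟩
  choose K hK using hbd
  have hK0 : ∀ m, 0 ≤ K m := fun m => (abs_nonneg _).trans (hK m 0)
  have hdz : ∀ m : ℕ, ∀ y, b < |y| → iteratedDeriv m ψ y = 0 := by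
    intro m y hy
    have : ψ =ᶠ[nhds y] fun _ => (0 : ℝ) := by
      have : {z : ℝ | b < |z|} ∈ nhds y := (isOpen_lt continuous_const continuous_abs).mem_nhds hy
      filter_upwards [this] with z hz using hψ0 z (le_of_lt hz)
    rw [this.iteratedDeriv_eq]
    simp
  set B := 1 + ∑ m ∈ Finset.range (l + 1), K m with hB
  have hB1 : 1 ≤ B := by
    have : 0 ≤ ∑ m ∈ Finset.range (l + 1), K m := Finset.sum_nonneg fun i _ => hK0 i
    linarith
  have hbB : ∀ m ≤ l, ∀ y, |iteratedDeriv m ψ y| ≤ B ^ m := by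
    intro m hm y
    rcases Nat.eq_zero_or_pos m with h | h
    · subst h; simp; rw [abs_of_nonneg ψ.nonneg]; exact ψ.le_one
    · have h1 : K m ≤ ∑ m ∈ Finset.range (l + 1), K m :=
        Finset.single_le_sum (f := K) (fun i _ => hK0 i) (Finset.mem_range.2 (by omega))
      calc _ ≤ K m := hK m y
        _ ≤ B ^ 1 := by rw [pow_one]; linarith
        _ ≤ B ^ m := pow_le_pow_right₀ hB1 h
  refine ⟨B, hB1, fun ℓ hℓ hℓ1 => ?_⟩
  have hb0 : 0 < b := ha.trans hab
  have hdl : ∀ y, b ≤ |y| → b ≤ |y / ℓ| := by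
    intro y hy
    rw [abs_div, abs_of_pos hℓ, le_div_iff₀ hℓ]
    nlinarith
  have hloc : ∀ (k : ℤ) (x : ℝ), |x - k| ≤ 1 - b → ψ ((x - round x) / ℓ) = ψ ((x - k) / ℓ) := by
    intro k x hx
    by_cases hr : round x = k
    · rw [hr]
    · have h1 : (1 : ℝ) ≤ |(round x : ℝ) - k| := by
        have : 1 ≤ |round x - k| := Int.one_le_abs (sub_ne_zero.2 hr)
        exact_mod_cast this
      have h2 : |(round x : ℝ) - k| ≤ |x - k| + |x - round x| := by
        have := abs_sub (x - k) (x - round x)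
        calc _ = |(x - k) - (x - round x)| := by congr 1; ring
          _ ≤ _ := abs_sub _ _
      have h3 : |x - round x| ≤ |x - k| := round_le x k
      rw [hψ0 _ (hdl _ (by linarith)), hψ0 _ (hdl _ (by linarith))]
  set χ : ℝ → ℝ := fun x => ψ ((x - round x) / ℓ) with hχ
  have hev : ∀ x, χ =ᶠ[nhds x] fun y => ψ ((y - round x) / ℓ) := by
    intro x
    have : {z : ℝ | |z - round x| < 1 - b} ∈ nhds x := by
      apply (isOpen_lt (by fun_prop) continuous_const).mem_nhds
      have := abs_sub_round x
      simp only [Set.mem_ofPred_eq]; linarith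
    filter_upwards [this] with z hz using hloc (round x) z (le_of_lt hz)
  have hcd : ContDiff ℝ l χ := by
    rw [contDiff_iff_contDiffAt]
    intro x
    have h1 : ContDiff ℝ l (fun y => ψ ((y - round x) / ℓ)) :=
      (hψsm l).comp ((contDiff_id.sub contDiff_const).div_const ℓ)
    exact h1.contDiffAt.congr_of_eventuallyEq (hev x)
  have hder : ∀ m ≤ l, ∀ x, iteratedDeriv m χ x = (1 / ℓ) ^ m * iteratedDeriv m ψ ((x - round x) / ℓ) := by
    intro m hm x
    rw [(hev x).iteratedDeriv_eq]
    have e : (fun y => ψ ((y - round x) / ℓ)) = fun y => (fun z => ψ ((1 / ℓ) * z)) (y - round x) := by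
      funext y; simp only []; congr 1; ring
    rw [e, iteratedDeriv_comp_sub_const (f := fun z => ψ ((1 / ℓ) * z)), iteratedDeriv_comp_const_mul (hψsm m)]
    simp only [smul_eq_mul]
    congr 2; ring
  have hper : Function.Periodic χ 1 := by
    intro x
    simp only [hχ, round_add_one]
    push_cast
    congr 2; ring
  have hcont : Continuous χ := hcd.continuous
  refine ⟨χ, hper, fun x => ψ.nonneg, fun x => ψ.le_one, ⟨hcd, fun m hm x => ?_⟩, ?_, ?_, ?_⟩
  · rw [hder m hm x, nbInd, abs_mul, abs_of_nonneg (by positivity : 0 ≤ (1 / ℓ) ^ m)]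
    split_ifs with h
    · rw [mul_one, div_pow, div_pow, one_pow]
      have := hbB m hm ((x - round x) / ℓ)
      rw [div_mul_eq_mul_div, one_mul]
      gcongr
    · rw [hdz m _ (by rw [abs_div, abs_of_pos hℓ, lt_div_iff₀ hℓ]; linarith)]; simp
  · intro x hx
    apply hψ1
    rw [abs_div, abs_of_pos hℓ, div_le_iff₀ hℓ]; exact hx
  all_goals
    have e1 : ∫ x in (0:ℝ)..1, χ x = ∫ x in (-(1/2):ℝ)..(1/2), χ x := by
      have := hper.intervalIntegral_add_eq 0 (-(1/2))
      norm_num at this ⊢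
      exact this
    have hii : ∀ u v : ℝ, IntervalIntegrable χ volume u v := fun u v => hcont.intervalIntegrable u v
    have hχ' : ∀ x : ℝ, |x| ≤ 1 / 2 → χ x = ψ (x / ℓ) := by
      intro x hx
      have := hloc 0 x (by simp; linarith)
      simpa using this
  · rw [e1]
    have haℓ : a * ℓ ≤ 1 / 2 := by nlinarith
    have haℓ0 : 0 < a * ℓ := by positivity
    calc 2 * a * ℓ = ∫ x in (-(a * ℓ))..(a * ℓ), (1 : ℝ) := by simp; ring
      _ = ∫ x in (-(a * ℓ))..(a * ℓ), χ x := by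
          apply intervalIntegral.integral_congr
          intro x hx
          rw [Set.uIcc_of_le (by linarith), Set.mem_Icc] at hx
          have hxa : |x| ≤ a * ℓ := abs_le.2 ⟨hx.1, hx.2⟩
          simp only []
          rw [hχ' x (by linarith), hψ1]
          rw [abs_div, abs_of_pos hℓ, div_le_iff₀ hℓ]; exact hxa
      _ ≤ _ := by
          apply intervalIntegral.integral_mono_interval (by linarith) (by linarith) (by linarith)
          · exact Filter.Eventually.of_forall fun x => ψ.nonneg
          · exact hii _ _
  · rw [e1]
    have hbℓ : b * ℓ ≤ 1 / 2 := by nlinarith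
    have hbℓ0 : 0 < b * ℓ := by positivity
    have hz : ∀ x : ℝ, |x| ≤ 1 / 2 → b * ℓ ≤ |x| → χ x = 0 := by
      intro x h1 h2
      rw [hχ' x h1, hψ0]
      rw [abs_div, abs_of_pos hℓ, le_div_iff₀ hℓ]; exact h2
    have s1 := intervalIntegral.integral_add_adjacent_intervals (hii (-(1/2)) (-(b * ℓ))) (hii (-(b * ℓ)) (b * ℓ))
    have s2 := intervalIntegral.integral_add_adjacent_intervals (hii (-(1/2)) (b * ℓ)) (hii (b * ℓ) (1/2))
    have z1 : ∫ x in (-(1/2))..(-(b * ℓ)), χ x = 0 := by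
      rw [intervalIntegral.integral_congr (g := fun _ => (0:ℝ))]
      · simp
      · intro x hx
        rw [Set.uIcc_of_le (by linarith), Set.mem_Icc] at hx
        exact hz x (abs_le.2 ⟨hx.1, by linarith [hx.2]⟩) (le_abs.2 (Or.inr (by linarith [hx.2])))
    have z2 : ∫ x in (b * ℓ)..(1/2), χ x = 0 := by
      rw [intervalIntegral.integral_congr (g := fun _ => (0:ℝ))]
      · simp
      · intro x hx
        rw [Set.uIcc_of_le (by linarith), Set.mem_Icc] at hx
        exact hz x (abs_le.2 ⟨by linarith [hx.1], hx.2⟩) (le_abs.2 (Or.inl (by linarith [hx.1])))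
    have z3 : ∫ x in (-(b * ℓ))..(b * ℓ), χ x ≤ 2 * (b * ℓ) := by
      calc _ ≤ ∫ x in (-(b * ℓ))..(b * ℓ), (1 : ℝ) := by
            apply intervalIntegral.integral_mono_on (by linarith) (hii _ _) (by simp)
            intro x _; exact ψ.le_one
        _ = _ := by simp; ring
    nlinarith

noncomputable def PP (ω : ℝ) (f : ℝ → ℝ) (i : ℕ) (x : ℝ) : ℝ :=
  ∏ t ∈ Finset.range i, f (x + t * ω)

noncomputable def NN (ω : ℝ) (f : ℝ → ℝ) (j : ℕ) (x : ℝ) : ℝ :=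
  ∑ i ∈ Finset.range j, 1 / (f (x + i * ω) * (PP ω f i x) ^ 2)

noncomputable def th (ω : ℝ) (f χ : ℝ → ℝ) (κ : ℝ) (R j : ℕ) (x : ℝ) : ℝ :=
  1 - (1 - Real.exp (-κ * χ x)) * (NN ω f j x / NN ω f R x)

noncomputable def stepf (ω : ℝ) (f χ : ℝ → ℝ) (κ : ℝ) (R : ℕ) (x : ℝ) : ℝ :=
  f x * ∏ k ∈ Finset.range R, (th ω f χ κ R (k + 1) (x - k * ω) / th ω f χ κ R k (x - k * ω))

noncomputable def FF (ω : ℝ) (f χ : ℝ → ℝ) (κ : ℝ) (R : ℕ) (x : ℝ) : ℝ :=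
  ∏ k ∈ Finset.range R, th ω f χ κ R (k + 1) (x - (k + 1) * ω)

noncomputable def wOf (ω : ℝ) (f : ℝ → ℝ) (x : ℝ) : ℝ := f x + 1 / f (x - ω)

structure StepHyp (ω : ℝ) (f χ : ℝ → ℝ) (κ : ℝ) (R : ℕ) : Prop where
  fpos : ∀ x, 0 < f x
  R1 : 1 ≤ R
  k0 : 0 ≤ κ
  c0 : ∀ x, 0 ≤ χ x
  c1 : ∀ x, χ x ≤ 1
  dis : ∀ (x : ℝ) (j : ℕ), 1 ≤ j → j ≤ R → χ x ≠ 0 → χ (x + j * ω) = 0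

lemma PP_pos {ω : ℝ} {f : ℝ → ℝ} (hf : ∀ x, 0 < f x) (i : ℕ) (x : ℝ) : 0 < PP ω f i x :=
  Finset.prod_pos fun _ _ => hf _

lemma PP_zero (ω : ℝ) (f : ℝ → ℝ) (x : ℝ) : PP ω f 0 x = 1 := by simp [PP]

lemma PP_succ (ω : ℝ) (f : ℝ → ℝ) (i : ℕ) (x : ℝ) :
    PP ω f (i + 1) x = PP ω f i x * f (x + i * ω) := by
  simp [PP, Finset.prod_range_succ]

lemma NN_zero (ω : ℝ) (f : ℝ → ℝ) (x : ℝ) : NN ω f 0 x = 0 := by simp [NN]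

lemma NN_succ (ω : ℝ) (f : ℝ → ℝ) (j : ℕ) (x : ℝ) :
    NN ω f (j + 1) x = NN ω f j x + 1 / (f (x + j * ω) * (PP ω f j x) ^ 2) := by
  simp [NN, Finset.sum_range_succ]

lemma NN_term_pos {ω : ℝ} {f : ℝ → ℝ} (hf : ∀ x, 0 < f x) (i : ℕ) (x : ℝ) :
    0 < 1 / (f (x + i * ω) * (PP ω f i x) ^ 2) := by
  have := hf (x + i * ω)
  have := PP_pos (ω := ω) hf i x
  positivity

lemma NN_nonneg {ω : ℝ} {f : ℝ → ℝ} (hf : ∀ x, 0 < f x) (i : ℕ) (x : ℝ) : 0 ≤ NN ω f i x :=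
  Finset.sum_nonneg fun _ _ => (NN_term_pos hf _ _).le

lemma NN_mono {ω : ℝ} {f : ℝ → ℝ} (hf : ∀ x, 0 < f x) {i j : ℕ} (hij : i ≤ j) (x : ℝ) :
    NN ω f i x ≤ NN ω f j x :=
  Finset.sum_le_sum_of_subset_of_nonneg (Finset.range_mono hij) fun _ _ _ => (NN_term_pos hf _ _).le

lemma NN_pos {ω : ℝ} {f : ℝ → ℝ} (hf : ∀ x, 0 < f x) {i : ℕ} (hi : 1 ≤ i) (x : ℝ) : 0 < NN ω f i x :=
  Finset.sum_pos (fun _ _ => (NN_term_pos hf _ _)) ⟨0, Finset.mem_range.2 (by omega)⟩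

lemma NN_one_le {ω : ℝ} {f : ℝ → ℝ} (hf : ∀ x, 0 < f x) {i : ℕ} (hi : 1 ≤ i) (x : ℝ) :
    1 / f x ≤ NN ω f i x := by
  have h := NN_mono (ω := ω) hf hi x
  rw [NN_succ, NN_zero, PP_zero] at h
  simpa using h

set_option linter.unusedSectionVars false
namespace StepHyp
variable {ω : ℝ} {f χ : ℝ → ℝ} {κ : ℝ} {R : ℕ} (H : StepHyp ω f χ κ R)
include H

lemma theta_le (x : ℝ) : Real.exp (-κ * χ x) ≤ 1 := by
  rw [Real.exp_le_one_iff]; have := mul_nonneg H.k0 (H.c0 x); linarith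

lemma theta_ge (x : ℝ) : Real.exp (-κ) ≤ Real.exp (-κ * χ x) := by
  rw [Real.exp_le_exp]; nlinarith [H.k0, H.c1 x]

lemma th_zero (x : ℝ) : th ω f χ κ R 0 x = 1 := by simp [th, NN_zero]

lemma th_R (x : ℝ) : th ω f χ κ R R x = Real.exp (-κ * χ x) := by
  have := NN_pos (ω := ω) H.fpos H.R1 x
  rw [th, div_self this.ne']; ring

lemma th_chi {x : ℝ} (hx : χ x = 0) (j : ℕ) : th ω f χ κ R j x = 1 := by
  simp [th, hx]

lemma th_anti {i j : ℕ} (hij : i ≤ j) (x : ℝ) : th ω f χ κ R j x ≤ th ω f χ κ R i x := by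
  have h1 := NN_mono (ω := ω) H.fpos hij x
  have h2 := NN_pos (ω := ω) H.fpos H.R1 x
  have h3 := H.theta_le x
  unfold th
  have h4 : NN ω f i x / NN ω f R x ≤ NN ω f j x / NN ω f R x := by gcongr
  nlinarith

lemma th_le_one (j : ℕ) (x : ℝ) : th ω f χ κ R j x ≤ 1 := by
  have := H.th_anti (Nat.zero_le j) x
  rwa [H.th_zero] at this

lemma th_ge {j : ℕ} (hj : j ≤ R) (x : ℝ) : Real.exp (-κ * χ x) ≤ th ω f χ κ R j x := by
  rw [← H.th_R]; exact H.th_anti hj x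

lemma th_pos {j : ℕ} (hj : j ≤ R) (x : ℝ) : 0 < th ω f χ κ R j x :=
  (Real.exp_pos _).trans_le (H.th_ge hj x)

/-- other translates vanish -/
lemma dis_sub {y : ℝ} (hy : χ y ≠ 0) {k k' : ℕ} (hk : k ≤ R) (hk' : k' ≤ R) (hne : k' ≠ k) :
    χ (y + k * ω - k' * ω) = 0 := by
  rcases lt_or_gt_of_ne hne with h | h
  · have := H.dis y (k - k') (by omega) (by omega) hy
    rw [Nat.cast_sub h.le] at this
    rw [← this]; congr 1; ring
  · by_contra hc
    have := H.dis _ (k' - k) (by omega) (by omega) hc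
    rw [Nat.cast_sub h.le] at this
    apply hy; rw [← this]; congr 1; ring

lemma stepf_pos (x : ℝ) : 0 < stepf ω f χ κ R x := by
  refine mul_pos (H.fpos x) (Finset.prod_pos fun k hk => ?_)
  have := Finset.mem_range.1 hk
  exact div_pos (H.th_pos (by omega) _) (H.th_pos (by omega) _)

lemma stepf_le (x : ℝ) : stepf ω f χ κ R x ≤ f x := by
  refine mul_le_of_le_one_right (H.fpos x).le (Finset.prod_le_one ?_ ?_)
  · intro k hk
    have := Finset.mem_range.1 hk
    exact (div_pos (H.th_pos (by omega) _) (H.th_pos (by omega) _)).le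
  · intro k hk
    have := Finset.mem_range.1 hk
    rw [div_le_one (H.th_pos (by omega) _)]
    exact H.th_anti (Nat.le_succ k) _

lemma stepf_off {x : ℝ} (hx : ∀ k : ℕ, k < R → χ (x - k * ω) = 0) : stepf ω f χ κ R x = f x := by
  rw [stepf, Finset.prod_eq_one, mul_one]
  intro k hk
  have h := hx k (Finset.mem_range.1 hk)
  rw [H.th_chi h, H.th_chi h, div_one]

lemma stepf_on {y : ℝ} (hy : χ y ≠ 0) {k : ℕ} (hk : k < R) :
    stepf ω f χ κ R (y + k * ω) =
      f (y + k * ω) * (th ω f χ κ R (k + 1) y / th ω f χ κ R k y) := by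
  rw [stepf, Finset.prod_eq_single k]
  · rw [add_sub_cancel_right]
  · intro k' hk' hne
    have hk'' := Finset.mem_range.1 hk'
    have h := H.dis_sub hy hk.le hk''.le hne
    rw [H.th_chi h, H.th_chi h, div_one]
  · intro h; exact absurd (Finset.mem_range.2 hk) h

lemma th_succ (j : ℕ) (y : ℝ) : th ω f χ κ R (j + 1) y = th ω f χ κ R j y -
    (1 - Real.exp (-κ * χ y)) / NN ω f R y * (1 / (f (y + j * ω) * (PP ω f j y) ^ 2)) := by
  rw [th, th, NN_succ]; ring

/-- the potential difference -/
lemma wdiff (x : ℝ) : wOf ω (stepf ω f χ κ R) x - wOf ω f x =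
    - ((1 - Real.exp (-κ * χ x)) * (1 / NN ω f R x)) +
    (1 - Real.exp (-κ * χ (x - R * ω))) * (1 / NN ω f R (x - R * ω)) *
      (1 / (PP ω f R (x - R * ω)) ^ 2 * (1 / Real.exp (-κ * χ (x - R * ω)))) := by
  by_cases hex : ∃ k : ℕ, k ≤ R ∧ χ (x - k * ω) ≠ 0
  · obtain ⟨k, hkR, hk⟩ := hex
    obtain ⟨y, hxy⟩ : ∃ y, x = y + k * ω := ⟨x - k * ω, by ring⟩
    subst hxy
    rw [add_sub_cancel_right] at hk
    have hR := H.R1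
    rcases Nat.eq_zero_or_pos k with h0 | h0
    · subst h0
      simp only [Nat.cast_zero, zero_mul, add_zero] at *
      have h1 : χ (y - R * ω) = 0 := by
        have := H.dis_sub hk (k := 0) (k' := R) (by omega) le_rfl (by omega)
        simpa using this
      have h2 : stepf ω f χ κ R (y - ω) = f (y - ω) := by
        apply H.stepf_off
        intro k' hk'
        have := H.dis_sub hk (k := 0) (k' := k' + 1) (by omega) (by omega) (by omega)
        rw [← this]; congr 1; push_cast; ring
      have h3 := H.stepf_on hk (k := 0) (by omega)
      simp only [Nat.cast_zero, zero_mul, add_zero] at h3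
      have h4 := H.th_succ 0 y
      rw [H.th_zero, PP_zero] at h4
      rw [H.th_zero, h4] at h3
      have hf := (H.fpos y).ne'
      have hN := (NN_pos (ω := ω) H.fpos H.R1 y).ne'
      rw [wOf, wOf, h2, h3, h1]
      simp
      field_simp
      ring
    · obtain ⟨j, rfl⟩ : ∃ j, k = j + 1 := ⟨k - 1, by omega⟩
      have e1 : y + ((j + 1 : ℕ) : ℝ) * ω - ω = y + j * ω := by push_cast; ring
      have h2 := H.stepf_on hk (k := j) (by omega)
      have hx0 : χ (y + ((j + 1 : ℕ) : ℝ) * ω) = 0 := by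
        have := H.dis_sub hk (k := j + 1) (k' := 0) hkR (by omega) (by omega)
        simpa using this
      have h4 := H.th_succ j y
      have hN := (NN_pos (ω := ω) H.fpos H.R1 y).ne'
      have hfj := (H.fpos (y + j * ω)).ne'
      have hP := (PP_pos (ω := ω) H.fpos j y).ne'
      have ht := (H.th_pos (by omega : j ≤ R) y).ne'
      have ht1 := (H.th_pos (by omega : j + 1 ≤ R) y).ne'
      rcases Nat.lt_or_ge (j + 1) R with hlt | hge
      · have h3 := H.stepf_on hk hlt
        have hxR : χ (y + ((j + 1 : ℕ) : ℝ) * ω - R * ω) = 0 :=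
          H.dis_sub hk hkR le_rfl (by omega)
        have h5 := H.th_succ (j + 1) y
        rw [PP_succ] at h5
        have hfj1 := (H.fpos (y + ((j + 1 : ℕ) : ℝ) * ω)).ne'
        rw [wOf, wOf, e1, h2, h3, hx0, hxR]
        simp only [mul_zero, Real.exp_zero, sub_self, zero_mul, neg_zero, add_zero]
        set c := (1 - Real.exp (-κ * χ y)) / NN ω f R y
        set t1 := th ω f χ κ R (j + 1) y
        set t0 := th ω f χ κ R j y
        set t2 := th ω f χ κ R (j + 1 + 1) y
        set u := f (y + j * ω)
        set u1 := f (y + ((j + 1 : ℕ) : ℝ) * ω)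
        set P := PP ω f j y
        have e5 : t2 / t1 = 1 - c * (1 / (u1 * (P * u) ^ 2)) / t1 := by rw [h5]; field_simp
        have e4 : t0 / t1 = 1 + c * (1 / (u * P ^ 2)) / t1 := by
          have : t0 = t1 + c * (1 / (u * P ^ 2)) := by linarith
          rw [this]; field_simp
        have e6 : 1 / (u * (t1 / t0)) = (1 / u) * (t0 / t1) := by field_simp
        rw [e6, e5, e4]
        field_simp
        ring
      · have hRj : R = j + 1 := by omega
        have h3 : stepf ω f χ κ R (y + ((j + 1 : ℕ) : ℝ) * ω) = f (y + ((j + 1 : ℕ) : ℝ) * ω) := by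
          apply H.stepf_off
          intro k' hk'
          exact H.dis_sub hk hkR hk'.le (by omega)
        have e7 : y + ((j + 1 : ℕ) : ℝ) * ω - R * ω = y := by rw [hRj]; ring
        have h6 : th ω f χ κ R (j + 1) y = Real.exp (-κ * χ y) := by rw [← H.th_R, hRj]
        have h7 : PP ω f R y = PP ω f j y * f (y + j * ω) := by rw [hRj, PP_succ]
        rw [wOf, wOf, e1, h2, h3, hx0, e7, h7, ← h6]
        simp only [mul_zero, Real.exp_zero, sub_self, zero_mul, neg_zero]
        set t1 := th ω f χ κ R (j + 1) y
        set t0 := th ω f χ κ R j y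
        rw [← h6] at h4
        have e4 : t0 = t1 + (1 - t1) / NN ω f R y * (1 / (f (y + j * ω) * PP ω f j y ^ 2)) := by
          linarith
        have e6 : 1 / (f (y + j * ω) * (t1 / t0)) = (1 / f (y + j * ω)) * (t0 / t1) := by field_simp
        rw [e6, e4]
        field_simp
        ring
  · push Not at hex
    have hR := H.R1
    have h1 : stepf ω f χ κ R x = f x := H.stepf_off fun k hk => hex k hk.le
    have h2 : stepf ω f χ κ R (x - ω) = f (x - ω) := H.stepf_off fun k hk => by
      have := hex (k + 1) (by omega)
      rw [← this]; congr 1; push_cast; ring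
    have h3 : χ x = 0 := by simpa using hex 0 (by omega)
    have h4 := hex R le_rfl
    rw [wOf, wOf, h1, h2, h3, h4]
    simp

lemma PP_on {y : ℝ} (hy : χ y ≠ 0) {j : ℕ} (hj : j ≤ R) :
    PP ω (stepf ω f χ κ R) j y = PP ω f j y * th ω f χ κ R j y := by
  induction j with
  | zero => rw [PP_zero, PP_zero, H.th_zero, one_mul]
  | succ j ih =>
    rw [PP_succ, PP_succ, ih (by omega), H.stepf_on hy (by omega)]
    have := (H.th_pos (by omega : j ≤ R) y).ne'
    field_simp

lemma NN_on {y : ℝ} (hy : χ y ≠ 0) {j : ℕ} (hj : j ≤ R) :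
    NN ω (stepf ω f χ κ R) j y * th ω f χ κ R j y = NN ω f j y := by
  induction j with
  | zero => rw [NN_zero, NN_zero, zero_mul]
  | succ j ih =>
    have ih' := ih (by omega)
    have ht := (H.th_pos (by omega : j ≤ R) y).ne'
    have ht1 := (H.th_pos (by omega : j + 1 ≤ R) y).ne'
    have hfj := (H.fpos (y + j * ω)).ne'
    have hP := (PP_pos (ω := ω) H.fpos j y).ne'
    have hN := (NN_pos (ω := ω) H.fpos H.R1 y).ne'
    have e1 : NN ω (stepf ω f χ κ R) j y = NN ω f j y / th ω f χ κ R j y := by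
      field_simp; linarith
    rw [NN_succ, NN_succ, e1, H.PP_on hy (by omega), H.stepf_on hy (by omega)]
    have h4 := H.th_succ j y
    have h5 : th ω f χ κ R j y = 1 - (1 - Real.exp (-κ * χ y)) / NN ω f R y * NN ω f j y := by
      rw [th]; ring
    set c := (1 - Real.exp (-κ * χ y)) / NN ω f R y
    set t1 := th ω f χ κ R (j + 1) y
    set t0 := th ω f χ κ R j y
    set u := f (y + j * ω)
    set P := PP ω f j y
    set N := NN ω f j y
    have e2 : (N / t0 + 1 / (u * (t1 / t0) * (P * t0) ^ 2)) * t1 = (N * t1 + 1 / (u * P ^ 2)) / t0 := by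
      field_simp
    rw [e2, div_eq_iff ht, h4, h5]
    ring

lemma NN_one {y : ℝ} (hy : χ y = 1) :
    NN ω (stepf ω f χ κ R) R y = Real.exp κ * NN ω f R y := by
  have h := H.NN_on (y := y) (by rw [hy]; norm_num) le_rfl
  rw [H.th_R, hy, mul_one] at h
  rw [← h, mul_comm, mul_assoc, ← Real.exp_add]; simp

lemma FF_rel (x : ℝ) : stepf ω f χ κ R x * FF ω f χ κ R x =
    f x * Real.exp (-κ * χ (x - R * ω)) * FF ω f χ κ R (x + ω) := by
  have e1 : FF ω f χ κ R (x + ω) = ∏ k ∈ Finset.range R, th ω f χ κ R (k + 1) (x - k * ω) := by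
    unfold FF; apply Finset.prod_congr rfl; intro k _; congr 1; ring
  have e2 : FF ω f χ κ R x =
      (∏ k ∈ Finset.range R, th ω f χ κ R k (x - k * ω)) * Real.exp (-κ * χ (x - R * ω)) := by
    rw [← H.th_R, ← Finset.prod_range_succ (fun k => th ω f χ κ R k (x - k * ω)),
      Finset.prod_range_succ', H.th_zero, mul_one]
    unfold FF; apply Finset.prod_congr rfl; intro k _; push_cast; rfl
  have hne : (∏ k ∈ Finset.range R, th ω f χ κ R k (x - k * ω)) ≠ 0 :=
    Finset.prod_ne_zero_iff.2 fun k hk => (H.th_pos (Finset.mem_range.1 hk).le _).ne'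
  rw [e1, e2, stepf, Finset.prod_div_distrib]
  generalize (∏ k ∈ Finset.range R, th ω f χ κ R k (x - k * ω)) = u at *
  generalize (∏ k ∈ Finset.range R, th ω f χ κ R (k + 1) (x - k * ω)) = v at *
  field_simp

lemma FF_le (x : ℝ) : FF ω f χ κ R x ≤ 1 :=
  Finset.prod_le_one (fun k hk => (H.th_pos (Finset.mem_range.1 hk) _).le) fun k _ => H.th_le_one _ _

lemma FF_ge (x : ℝ) : Real.exp (-κ) ≤ FF ω f χ κ R x := by
  by_cases hex : ∃ k : ℕ, k < R ∧ χ (x - (k + 1) * ω) ≠ 0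
  · obtain ⟨k, hk, hx⟩ := hex
    rw [FF, Finset.prod_eq_single k]
    · exact (H.theta_ge _).trans (H.th_ge hk _)
    · intro k' hk' hne
      have hk'' := Finset.mem_range.1 hk'
      apply H.th_chi
      have := H.dis_sub hx (k := k + 1) (k' := k' + 1) hk hk'' (by omega)
      rw [← this]; congr 1; push_cast; ring
    · intro h; exact absurd (Finset.mem_range.2 hk) h
  · push Not at hex
    rw [FF, Finset.prod_eq_one]
    · rw [Real.exp_le_one_iff]; linarith [H.k0]
    · intro k hk; exact H.th_chi (hex k (Finset.mem_range.1 hk)) _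

lemma FF_pos (x : ℝ) : 0 < FF ω f χ κ R x := (Real.exp_pos _).trans_le (H.FF_ge x)

lemma count (j : ℕ) (x : ℝ) : ∑ i ∈ Finset.range j, χ (x + i * ω) ≤ j / (R + 1) + 1 := by
  have block : ∀ (n : ℕ) (z : ℝ), n ≤ R + 1 → ∑ i ∈ Finset.range n, χ (z + i * ω) ≤ 1 := by
    intro n z hn
    by_cases hex : ∃ k : ℕ, k < n ∧ χ (z + k * ω) ≠ 0
    · obtain ⟨k, hk, hz⟩ := hex
      rw [Finset.sum_eq_single k]
      · exact H.c1 _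
      · intro k' hk' hne
        have hk'' := Finset.mem_range.1 hk'
        rcases lt_or_gt_of_ne hne with h | h
        · by_contra hc
          have := H.dis _ (k - k') (by omega) (by omega) hc
          rw [Nat.cast_sub h.le] at this
          apply hz; rw [← this]; congr 1; ring
        · have := H.dis _ (k' - k) (by omega) (by omega) hz
          rw [Nat.cast_sub h.le] at this
          rw [← this]; congr 1; ring
      · intro h; exact absurd (Finset.mem_range.2 hk) h
    · push Not at hex
      rw [Finset.sum_eq_zero fun k hk => hex k (Finset.mem_range.1 hk)]; norm_num
  induction j using Nat.strong_induction_on generalizing x with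
  | _ j ih =>
  rcases Nat.lt_or_ge j (R + 1) with h | h
  · refine (block j x (by omega)).trans ?_
    have : (0 : ℝ) ≤ j / (R + 1) := by positivity
    linarith
  · obtain ⟨d, rfl⟩ : ∃ d, j = d + (R + 1) := ⟨j - (R + 1), by omega⟩
    rw [Finset.sum_range_add]
    have h1 := ih d (by omega) x
    have h2 := block (R + 1) (x + d * ω) le_rfl
    have e : ∑ i ∈ Finset.range (R + 1), χ (x + ((d + i : ℕ) : ℝ) * ω) =
        ∑ i ∈ Finset.range (R + 1), χ (x + d * ω + i * ω) := by
      apply Finset.sum_congr rfl; intro i _; congr 1; push_cast; ring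
    rw [e]
    have e2 : ((d + (R + 1) : ℕ) : ℝ) / (R + 1) = d / (R + 1) + 1 := by
      have : (R : ℝ) + 1 ≠ 0 := by positivity
      push_cast; field_simp
    rw [e2]; linarith

lemma PP_FF (j : ℕ) (x : ℝ) : PP ω (stepf ω f χ κ R) j x * FF ω f χ κ R x =
    PP ω f j x * Real.exp (-κ * ∑ i ∈ Finset.range j, χ (x - R * ω + i * ω)) *
      FF ω f χ κ R (x + j * ω) := by
  induction j with
  | zero => simp [PP_zero]
  | succ j ih =>
    rw [PP_succ, PP_succ, Finset.sum_range_succ, mul_add, Real.exp_add]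
    have h := H.FF_rel (x + j * ω)
    have e1 : x + ((j + 1 : ℕ) : ℝ) * ω = x + j * ω + ω := by push_cast; ring
    have e2 : x + j * ω - R * ω = x - R * ω + j * ω := by ring
    rw [e2] at h
    rw [e1]
    calc _ = (PP ω (stepf ω f χ κ R) j x * FF ω f χ κ R x) * stepf ω f χ κ R (x + j * ω) := by ring
      _ = PP ω f j x * Real.exp (-κ * ∑ i ∈ Finset.range j, χ (x - R * ω + i * ω)) *
          (stepf ω f χ κ R (x + j * ω) * FF ω f χ κ R (x + j * ω)) := by rw [ih]; ring
      _ = _ := by rw [h]; ring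

lemma growth {β a : ℝ} (hg : ∀ (j : ℕ) (x : ℝ), Real.exp ((1 - β) * j - a) ≤ PP ω f j x) (j : ℕ) (x : ℝ) :
    Real.exp ((1 - (β + κ / (R + 1))) * j - (a + 2 * κ)) ≤ PP ω (stepf ω f χ κ R) j x := by
  have h1 := H.PP_FF j x
  have h2 := H.FF_le x
  have h3 := H.FF_ge (x + j * ω)
  have h4 := hg j x
  have h5 := H.count j (x - R * ω)
  have hp := PP_pos (ω := ω) H.stepf_pos j x
  have h6 : Real.exp (-κ * (j / (R + 1) + 1)) ≤
      Real.exp (-κ * ∑ i ∈ Finset.range j, χ (x - R * ω + i * ω)) := by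
    rw [Real.exp_le_exp]; nlinarith [H.k0]
  calc _ = Real.exp ((1 - β) * j - a) * Real.exp (-κ * (j / (R + 1) + 1)) * Real.exp (-κ) := by
        rw [← Real.exp_add, ← Real.exp_add]; congr 1; ring
    _ ≤ PP ω f j x * Real.exp (-κ * ∑ i ∈ Finset.range j, χ (x - R * ω + i * ω)) *
      FF ω f χ κ R (x + j * ω) := by
        have := (Real.exp_pos ((1 - β) * j - a)).trans_le h4
        gcongr
    _ = PP ω (stepf ω f χ κ R) j x * FF ω f χ κ R x := h1.symm
    _ ≤ PP ω (stepf ω f χ κ R) j x := mul_le_of_le_one_right hp.le h2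

end StepHyp

set_option linter.unusedSectionVars false

namespace StepHyp
variable {ω : ℝ} {f χ I : ℝ → ℝ} {κ C c : ℝ} {R l : ℕ} (H : StepHyp ω f χ κ R)
  (hC : 0 ≤ C) (hf : Dom l C f f)
include H hC hf

lemma dom_PP (i : ℕ) : Dom l (i * C) (PP ω f i) (PP ω f i) :=
  Dom.prod hC i fun t _ => hf.shift (t * ω)

lemma dom_term {i : ℕ} (hi : i < R) : Dom l (2 ^ l * (2 * R * C))
    (fun x => 1 / (f (x + i * ω) * (PP ω f i x) ^ 2))
    (fun x => 1 / (f (x + i * ω) * (PP ω f i x) ^ 2)) := by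
  have h1 := H.dom_PP hC hf i
  have h2 := (hf.shift (i * ω)).mul hC (by positivity) (h1.mul (by positivity) (by positivity) h1)
  have hiR : (i : ℝ) + 1 ≤ R := by exact_mod_cast hi
  have h3 := h2.mono (C' := 2 * R * C) (Z' := fun x => f (x + i * ω) * (PP ω f i x * PP ω f i x))
    (by positivity) (by nlinarith) fun x => le_rfl
  have h4 := h3.inv (by positivity) fun x =>
    mul_pos (H.fpos _) (mul_pos (PP_pos H.fpos _ _) (PP_pos H.fpos _ _))
  refine h4.congr ?_ ?_ <;>
  · intro x; rw [pow_two]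

lemma dom_NN {j : ℕ} (hj : j ≤ R) : Dom l (2 ^ l * (2 * R * C)) (NN ω f j) (NN ω f j) :=
  Dom.sum (by positivity) _ fun i hi => H.dom_term hC hf (by have := Finset.mem_range.1 hi; omega)

lemma dom_D : Dom l (2 ^ l * (2 ^ l * (2 * R * C))) (fun x => 1 / NN ω f R x)
    (fun x => 1 / NN ω f R x) :=
  (H.dom_NN hC hf le_rfl).inv (by positivity) fun x => NN_pos H.fpos H.R1 x

lemma dom_rho {j : ℕ} (hj : j ≤ R) :
    Dom l (2 ^ l * (2 * R * C) + 2 ^ l * (2 ^ l * (2 * R * C)))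
    (fun x => (NN ω f R x - NN ω f j x) * (1 / NN ω f R x))
    (fun x => (NN ω f R x - NN ω f j x) * (1 / NN ω f R x)) := by
  have h1 := Dom.sum (C := 2 ^ l * (2 * R * C)) (by positivity) (Finset.Ico j R) fun i hi =>
    H.dom_term hC hf (i := i) (by have := Finset.mem_Ico.1 hi; omega)
  have h2 := h1.mul (by positivity) (by positivity) (H.dom_D hC hf)
  refine h2.congr ?_ ?_ <;>
  · intro x; rw [Finset.sum_Ico_eq_sub _ hj]; rfl

variable (hc : 0 ≤ c) (hχ : Dom l c χ I) (hI : ∀ x, I x = 0 ∨ I x = 1)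
include hc hχ hI

lemma dom_th {j : ℕ} (hj : j ≤ R) :
    Dom l (3 * (2 ^ l * c * (1 + κ) + (2 ^ l * (2 * R * C) + 2 ^ l * (2 ^ l * (2 * R * C)))))
      (th ω f χ κ R j) (th ω f χ κ R j) := by
  have k0 := H.k0
  have h1 := Dom.theta hc H.k0 hχ hI
  have h2 := H.dom_rho hC hf hj
  have h3 := h1.interp (by positivity) (by positivity) h2 H.theta_le fun x => by
    have := NN_pos (ω := ω) H.fpos H.R1 x
    have := NN_nonneg (ω := ω) H.fpos j x
    rw [mul_one_div, div_le_one (by assumption)]; linarith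
  refine h3.congr ?_ ?_ <;>
  · intro x
    have := (NN_pos (ω := ω) H.fpos H.R1 x).ne'
    rw [th]; field_simp; ring

lemma dom_step0 : Dom l (C + R * ((1 + 2 ^ l) *
      (3 * (2 ^ l * c * (1 + κ) + (2 ^ l * (2 * R * C) + 2 ^ l * (2 ^ l * (2 * R * C)))))))
      (stepf ω f χ κ R) (stepf ω f χ κ R) := by
  have k0 := H.k0
  set T := 3 * (2 ^ l * c * (1 + κ) + (2 ^ l * (2 * R * C) + 2 ^ l * (2 ^ l * (2 * R * C)))) with hT
  have hT0 : 0 ≤ T := by positivity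
  have h1 : ∀ k < R, Dom l ((1 + 2 ^ l) * T)
      (fun x => th ω f χ κ R (k + 1) (x - k * ω) / th ω f χ κ R k (x - k * ω))
      (fun x => th ω f χ κ R (k + 1) (x - k * ω) / th ω f χ κ R k (x - k * ω)) := by
    intro k hk
    have a1 := H.dom_th hC hf hc hχ hI (j := k + 1) (by omega)
    have a2 := (H.dom_th hC hf hc hχ hI (j := k) (by omega)).inv hT0 fun x => H.th_pos (by omega) x
    have a3 := (a1.mul hT0 (by positivity) a2).shift (-(k * ω))
    have a4 := a3.mono (C' := (1 + 2 ^ l) * T) (by positivity) (by linarith) fun x => le_rfl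
    refine a4.congr ?_ ?_ <;>
    · intro x; rw [mul_one_div]; rfl
  have h2 := Dom.prod (by positivity) R h1
  exact hf.mul hC (by positivity) h2

lemma dom_wdiff0 : Dom l ((1 + 2 ^ l) * (2 ^ l * c * (1 + κ) + 2 ^ l * (2 * R * C)))
    (fun x => wOf ω (stepf ω f χ κ R) x - wOf ω f x)
    (fun x => I x * (1 / NN ω f R x) + I (x - R * ω) * (1 / NN ω f R (x - R * ω)) *
      (1 / (PP ω f R (x - R * ω)) ^ 2 * (1 / Real.exp (-κ * χ (x - R * ω))))) := by
  have k0 := H.k0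
  have h1 := Dom.one_sub_theta hc H.k0 hχ hI H.c0
  have h2 := h1.mul (by positivity) (by positivity) (H.dom_D hC hf)
  have hP := H.dom_PP hC hf R
  have h3 := (hP.mul (by positivity) (by positivity) hP).inv (by positivity) fun x =>
    mul_pos (PP_pos H.fpos _ _) (PP_pos H.fpos _ _)
  have h4 := (Dom.theta hc H.k0 hχ hI).inv (by positivity) fun x => Real.exp_pos _
  have h5 := (h2.mul (by positivity) (by positivity) (h3.mul (by positivity) (by positivity) h4)).shift (-(R * ω))
  have h6 := (h2.mono (C' := (1 + 2 ^ l) * (2 ^ l * c * (1 + κ) + 2 ^ l * (2 * R * C)))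
    (by positivity) (by
      have : 0 ≤ 2 ^ l * c * (1 + κ) := by positivity
      have : 0 ≤ 2 ^ l * (2 ^ l * c * (1 + κ)) := by positivity
      have : 0 ≤ 2 ^ l * (2 * R * C) := by positivity
      linarith) fun x => le_rfl).neg.add
      (h5.mono (C' := (1 + 2 ^ l) * (2 ^ l * c * (1 + κ) + 2 ^ l * (2 * R * C)))
        (by positivity) (by
          apply le_of_eq; ring) fun x => le_rfl)
  refine h6.congr ?_ ?_
  · intro x
    rw [H.wdiff x, pow_two, ← sub_eq_add_neg x]
  · intro x
    rw [pow_two, ← sub_eq_add_neg x]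

end StepHyp

lemma step_const_aux {L B R C κ ℓ : ℝ} (hL : 1 ≤ L) (hB : 1 ≤ B) (hR : 1 ≤ R) (hC : 0 ≤ C)
    (hκ : 0 ≤ κ) (hℓ : 0 < ℓ) (hRℓ : 1 / 2 ≤ (R + 1) * ℓ) :
    (C + R * ((1 + L) * (3 * (L * (B / ℓ) * (1 + κ) + (L * (2 * R * C) + L * (L * (2 * R * C)))))) ≤
      100 * L ^ 3 * B * R ^ 2 * (1 + κ + C)) ∧
    ((1 + L) * (L * (B / ℓ) * (1 + κ) + L * (2 * R * C)) ≤ 100 * L ^ 3 * B * R ^ 2 * (1 + κ + C)) := by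
  have hc : B / ℓ ≤ 4 * B * R := by
    rw [div_le_iff₀ hℓ]
    nlinarith [mul_nonneg (by linarith : (0:ℝ) ≤ R - 1) hℓ.le]
  have hc0 : 0 ≤ B / ℓ := by positivity
  set c := B / ℓ
  have s1 : L * c * (1 + κ) ≤ L * (4 * B * R) * (1 + κ) := by gcongr
  have L0 : (0:ℝ) ≤ L := by linarith
  have hLL : L ≤ L ^ 2 := by nlinarith
  have h2 : L * (2 * R * C) + L * (L * (2 * R * C)) ≤ 4 * L ^ 2 * R * C := by
    have : L * (R * C) ≤ L ^ 2 * (R * C) := by gcongr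
    nlinarith
  have hone : 1 + L ≤ 2 * L := by linarith
  have hBig : 0 ≤ L * (4 * B * R) * (1 + κ) + 4 * L ^ 2 * R * C := by positivity
  have h3 : L * c * (1 + κ) + (L * (2 * R * C) + L * (L * (2 * R * C))) ≤
      8 * L ^ 2 * B * R * (1 + κ + C) := by
    have a1 : L * (4 * B * R) * (1 + κ) ≤ 4 * L ^ 2 * B * R * (1 + κ) := by
      have : L * (B * R * (1 + κ)) ≤ L ^ 2 * (B * R * (1 + κ)) := by gcongr
      nlinarith
    have a2 : 4 * L ^ 2 * R * C ≤ 4 * L ^ 2 * B * R * C := by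
      have : 1 * (L ^ 2 * R * C) ≤ B * (L ^ 2 * R * C) := by gcongr
      nlinarith
    have a3 : 0 ≤ L ^ 2 * B * R * (1 + κ) := by positivity
    have a4 : 0 ≤ L ^ 2 * B * R * C := by positivity
    nlinarith
  have hW : 0 ≤ L * c * (1 + κ) + (L * (2 * R * C) + L * (L * (2 * R * C))) := by positivity
  constructor
  · have h4 : R * ((1 + L) * (3 * (L * c * (1 + κ) + (L * (2 * R * C) + L * (L * (2 * R * C)))))) ≤
        R * ((2 * L) * (3 * (8 * L ^ 2 * B * R * (1 + κ + C)))) := by gcongr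
    have h5 : C ≤ L ^ 3 * B * R ^ 2 * (1 + κ + C) := by
      have a1 : 1 ≤ L ^ 3 * B * R ^ 2 := by
        have := one_le_pow₀ hL (n := 3)
        have := one_le_pow₀ hR (n := 2)
        exact one_le_mul_of_one_le_of_one_le (one_le_mul_of_one_le_of_one_le ‹_› hB) ‹_›
      nlinarith
    have h6 : 0 ≤ L ^ 3 * B * R ^ 2 * (1 + κ + C) := by positivity
    nlinarith
  · have h4 : (1 + L) * (L * c * (1 + κ) + L * (2 * R * C)) ≤
        (2 * L) * (8 * L ^ 2 * B * R * (1 + κ + C)) := by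
      have : 0 ≤ L * (L * (2 * R * C)) := by positivity
      gcongr
      linarith
    have h5 : L ^ 3 * B * R * (1 + κ + C) ≤ L ^ 3 * B * R ^ 2 * (1 + κ + C) := by
      gcongr
      nlinarith
    have h6 : 0 ≤ L ^ 3 * B * R ^ 2 * (1 + κ + C) := by positivity
    nlinarith

lemma nbInd_zero_or_one (r x : ℝ) : nbInd r x = 0 ∨ nbInd r x = 1 := by
  unfold nbInd; split_ifs <;> simp

/-- Derivative estimates of one step. -/
lemma step_est {ω : ℝ} {f χ : ℝ → ℝ} {κ C B ℓ b d β a : ℝ} {R l : ℕ} (H : StepHyp ω f χ κ R)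
    (hC : 0 ≤ C) (hf : Dom l C f f) (hB : 1 ≤ B) (hℓ : 0 < ℓ)
    (hRℓ : 1 / 2 ≤ ((R : ℝ) + 1) * ℓ) (hχ : Dom l (B / ℓ) χ (nbInd (b * ℓ)))
    (hfe : ∀ x, f x ≤ Real.exp 1)
    (hg : ∀ (j : ℕ) (x : ℝ), Real.exp ((1 - β) * j - a) ≤ PP ω f j x)
    (hd0 : 0 ≤ d) (hd : ∀ x : ℝ, |x - round x| ≤ b * ℓ → 1 / NN ω f R x ≤ d) :
    Dom l (100 * (2 ^ l) ^ 3 * B * R ^ 2 * (1 + κ + C)) (stepf ω f χ κ R) (stepf ω f χ κ R) ∧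
    ContDiff ℝ l (fun x => wOf ω (stepf ω f χ κ R) x - wOf ω f x) ∧
    ∀ m ≤ l, ∀ x, |iteratedDeriv m (fun x => wOf ω (stepf ω f χ κ R) x - wOf ω f x) x| ≤
      (100 * (2 ^ l) ^ 3 * B * R ^ 2 * (1 + κ + C)) ^ l *
        (d + Real.exp (1 + κ - 2 * ((1 - β) * R - a))) := by
  have k0 := H.k0
  have hR1 : (1 : ℝ) ≤ R := by exact_mod_cast H.R1
  have hL : (1 : ℝ) ≤ 2 ^ l := one_le_pow₀ (by norm_num)
  obtain ⟨c1, c2⟩ := step_const_aux hL hB hR1 hC k0 hℓ hRℓ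
  have hI := nbInd_zero_or_one (b * ℓ)
  have h1 := H.dom_step0 hC hf (by positivity) hχ hI
  have h2 := H.dom_wdiff0 hC hf (by positivity) hχ hI
  refine ⟨h1.mono (by positivity) c1 fun x => le_rfl, h2.1, fun m hm x => ?_⟩
  set E := 100 * (2 ^ l) ^ 3 * B * R ^ 2 * (1 + κ + C) with hE
  have hE1 : 1 ≤ E := by
    have := one_le_pow₀ hL (n := 3)
    have := one_le_pow₀ hR1 (n := 2)
    have a1 : 1 ≤ (100 * (2 ^ l) ^ 3 * B * R ^ 2 : ℝ) := by
      refine one_le_mul_of_one_le_of_one_le (one_le_mul_of_one_le_of_one_le ?_ hB) ‹_›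
      linarith
    nlinarith
  have h3 := h2.2 m hm x
  refine h3.trans ?_
  have hDe : ∀ y, 1 / NN ω f R y ≤ Real.exp 1 := by
    intro y
    have a1 := NN_one_le (ω := ω) H.fpos H.R1 y
    have a2 := H.fpos y
    have a3 := NN_pos (ω := ω) H.fpos H.R1 y
    refine le_trans ?_ (hfe y)
    rw [div_le_iff₀ a3]
    rw [div_le_iff₀ a2] at a1
    linarith
  have hD0 : ∀ y, 0 ≤ 1 / NN ω f R y := fun y => by
    have a3 := NN_pos (ω := ω) H.fpos H.R1 y
    positivity
  have z1 : nbInd (b * ℓ) x * (1 / NN ω f R x) ≤ d := by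
    rw [nbInd]; split_ifs with h
    · rw [one_mul]; exact hd x h
    · rw [zero_mul]; exact hd0
  have z2 : nbInd (b * ℓ) (x - R * ω) * (1 / NN ω f R (x - R * ω)) *
      (1 / (PP ω f R (x - R * ω)) ^ 2 * (1 / Real.exp (-κ * χ (x - R * ω)))) ≤
      Real.exp (1 + κ - 2 * ((1 - β) * R - a)) := by
    set y := x - R * ω
    have i1 : nbInd (b * ℓ) y ≤ 1 := by rcases hI y with h | h <;> rw [h]; norm_num
    have i0 : 0 ≤ nbInd (b * ℓ) y := by rcases hI y with h | h <;> rw [h]; norm_num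
    have p1 := hg R y
    have t1 := H.theta_ge y
    have n0 := hD0 y
    have n1 := hDe y
    calc _ ≤ 1 * Real.exp 1 * (1 / (Real.exp ((1 - β) * R - a)) ^ 2 * (1 / Real.exp (-κ))) := by
          gcongr
      _ = _ := by
          rw [one_div, one_div, ← Real.exp_neg, ← Real.exp_nat_mul, ← Real.exp_neg, ← Real.exp_add,
            one_mul, ← Real.exp_add]
          congr 1; push_cast; ring
  have hz := h2.nonneg x
  refine le_trans (mul_le_mul (pow_le_pow_left₀ (by positivity) c2 m) (add_le_add z1 z2) hz
    (by positivity)) ?_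
  gcongr

set_option linter.unusedSectionVars false

lemma per_shift {f : ℝ → ℝ} (hf : Function.Periodic f 1) (x c : ℝ) : f (x + 1 + c) = f (x + c) := by
  rw [← hf (x + c)]; congr 1; ring

lemma per_shift_sub {f : ℝ → ℝ} (hf : Function.Periodic f 1) (x c : ℝ) : f (x + 1 - c) = f (x - c) := by
  rw [← hf (x - c)]; congr 1; ring

lemma PP_periodic {ω : ℝ} {f : ℝ → ℝ} (hf : Function.Periodic f 1) (i : ℕ) :
    Function.Periodic (PP ω f i) 1 := by
  intro x; simp only [PP, per_shift hf]

lemma NN_periodic {ω : ℝ} {f : ℝ → ℝ} (hf : Function.Periodic f 1) (i : ℕ) :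
    Function.Periodic (NN ω f i) 1 := by
  intro x; simp only [NN, per_shift hf, PP_periodic hf _ x]

lemma th_periodic {ω κ : ℝ} {f χ : ℝ → ℝ} (hf : Function.Periodic f 1) (hχ : Function.Periodic χ 1)
    (R j : ℕ) : Function.Periodic (th ω f χ κ R j) 1 := by
  intro x; simp only [th, NN_periodic hf _ x, hχ x]

lemma stepf_periodic {ω κ : ℝ} {f χ : ℝ → ℝ} (hf : Function.Periodic f 1) (hχ : Function.Periodic χ 1)
    (R : ℕ) : Function.Periodic (stepf ω f χ κ R) 1 := by
  intro x; simp only [stepf, hf x, per_shift_sub (th_periodic hf hχ R _)]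

lemma FF_periodic {ω κ : ℝ} {f χ : ℝ → ℝ} (hf : Function.Periodic f 1) (hχ : Function.Periodic χ 1)
    (R : ℕ) : Function.Periodic (FF ω f χ κ R) 1 := by
  intro x; simp only [FF, per_shift_sub (th_periodic hf hχ R _)]

lemma wOf_periodic {ω : ℝ} {f : ℝ → ℝ} (hf : Function.Periodic f 1) :
    Function.Periodic (wOf ω f) 1 := by
  intro x; simp only [wOf, hf x, per_shift_sub hf]

lemma wOf_contDiff {ω : ℝ} {f : ℝ → ℝ} {l : ℕ} (hf : ContDiff ℝ l f) (h0 : ∀ x, 0 < f x) :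
    ContDiff ℝ l (wOf ω f) := by
  unfold wOf
  refine hf.add (contDiff_const.div (hf.comp (contDiff_id.sub contDiff_const)) fun x => (h0 _).ne')

lemma PP_cont {ω : ℝ} {f : ℝ → ℝ} (hf : Continuous f) (i : ℕ) : Continuous (PP ω f i) := by
  unfold PP; fun_prop

lemma NN_cont {ω : ℝ} {f : ℝ → ℝ} (hf : Continuous f) (h0 : ∀ x, 0 < f x) (i : ℕ) :
    Continuous (NN ω f i) := by
  unfold NN
  refine continuous_finsetSum _ fun j _ => ?_
  have := PP_cont (ω := ω) hf j
  refine Continuous.div continuous_const (by fun_prop) fun x => ?_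
  exact (mul_pos (h0 _) (pow_pos (PP_pos h0 _ _) 2)).ne'

/-- shift invariance -/
lemma int_shift {g : ℝ → ℝ} (hg : Function.Periodic g 1) (c : ℝ) :
    ∫ x in (0:ℝ)..1, g (x + c) = ∫ x in (0:ℝ)..1, g x := by
  rw [intervalIntegral.integral_comp_add_right (fun x => g x)]
  have := hg.intervalIntegral_add_eq (0 + c) 0
  simpa [add_comm] using this

namespace StepHyp
variable {ω : ℝ} {f χ : ℝ → ℝ} {κ : ℝ} {R : ℕ} (H : StepHyp ω f χ κ R)
include H

lemma th_cont (hf : Continuous f) (hχ : Continuous χ) (j : ℕ) : Continuous (th ω f χ κ R j) := by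
  unfold th
  have h1 := NN_cont (ω := ω) hf H.fpos j
  have h2 := NN_cont (ω := ω) hf H.fpos R
  refine continuous_const.sub (Continuous.mul (by fun_prop) (h1.div h2 fun x => ?_))
  exact (NN_pos H.fpos H.R1 x).ne'

lemma stepf_cont (hf : Continuous f) (hχ : Continuous χ) : Continuous (stepf ω f χ κ R) := by
  unfold stepf
  refine hf.mul (continuous_finsetProd _ fun k hk => ?_)
  have := Finset.mem_range.1 hk
  refine Continuous.div ((H.th_cont hf hχ _).comp (by fun_prop))
    ((H.th_cont hf hχ _).comp (by fun_prop)) fun x => (H.th_pos this.le _).ne'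

lemma FF_cont (hf : Continuous f) (hχ : Continuous χ) : Continuous (FF ω f χ κ R) := by
  unfold FF
  exact continuous_finsetProd _ fun k hk => (H.th_cont hf hχ _).comp (by fun_prop)

lemma int_log (hf : Continuous f) (hχ : Continuous χ) (hfp : Function.Periodic f 1)
    (hχp : Function.Periodic χ 1) :
    ∫ x in (0:ℝ)..1, Real.log (stepf ω f χ κ R x) =
      (∫ x in (0:ℝ)..1, Real.log (f x)) - κ * ∫ x in (0:ℝ)..1, χ x := by
  have hFc : Continuous fun x => Real.log (FF ω f χ κ R x) :=
    (H.FF_cont hf hχ).log fun x => (H.FF_pos x).ne'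
  have hFc' : Continuous fun x => Real.log (FF ω f χ κ R (x + ω)) :=
    hFc.comp (continuous_id.add continuous_const)
  have hfl : Continuous fun x => Real.log (f x) := hf.log fun x => (H.fpos x).ne'
  have hFp : Function.Periodic (fun x => Real.log (FF ω f χ κ R x)) 1 := fun x => by
    simp only [FF_periodic hfp hχp R x]
  have e : ∀ x, Real.log (stepf ω f χ κ R x) = (Real.log (f x) - κ * χ (x + -(R * ω))) +
      (Real.log (FF ω f χ κ R (x + ω)) - Real.log (FF ω f χ κ R x)) := by
    intro x
    have h := congrArg Real.log (H.FF_rel x)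
    have p1 := (H.stepf_pos x).ne'
    have p2 := (H.FF_pos x).ne'
    have p3 := (H.FF_pos (x + ω)).ne'
    have p4 := (H.fpos x).ne'
    rw [Real.log_mul p1 p2, Real.log_mul (mul_ne_zero p4 (Real.exp_pos _).ne') p3,
      Real.log_mul p4 (Real.exp_pos _).ne', Real.log_exp, sub_eq_add_neg x] at h
    linarith
  simp_rw [e]
  rw [intervalIntegral.integral_add, intervalIntegral.integral_sub, intervalIntegral.integral_sub,
    intervalIntegral.integral_const_mul, int_shift hχp, int_shift hFp, sub_self, add_zero]
  all_goals apply Continuous.intervalIntegrable; fun_prop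
end StepHyp

/-- disjointness from the arithmetic of ω -/
lemma dis_of_nt {ω ℓ b c : ℝ} {χ : ℝ → ℝ} {R l : ℕ} (hb : b < 1 / 2) (hℓ : 0 < ℓ)
    (hχ : Dom l c χ (nbInd (b * ℓ)))
    (hR : ∀ j : ℕ, 1 ≤ j → j ≤ R → ∀ m : ℤ, ℓ ≤ |(j : ℝ) * ω - m|)
    (x : ℝ) (j : ℕ) (h1 : 1 ≤ j) (h2 : j ≤ R) (hx : χ x ≠ 0) : χ (x + j * ω) = 0 := by
  have key : ∀ y, χ y ≠ 0 → |y - round y| ≤ b * ℓ := by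
    intro y hy
    by_contra hc
    have := hχ.abs_le y
    rw [nbInd, if_neg hc] at this
    exact hy (abs_eq_zero.1 (le_antisymm this (abs_nonneg _)))
  by_contra hy
  have a1 := key _ hx
  have a2 := key _ hy
  have a3 := hR j h1 h2 (round (x + j * ω) - round x)
  push_cast at a3
  have e : (j : ℝ) * ω - (round (x + j * ω) - round x) =
    (x + j * ω - round (x + j * ω)) - (x - round x) := by ring
  rw [e] at a3
  have a4 := abs_sub (x + j * ω - round (x + j * ω)) (x - round x)
  nlinarith

lemma opNorm_mul_le (A B : Matrix (Fin 2) (Fin 2) ℝ) : opNorm (A * B) ≤ opNorm A * opNorm B := by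
  unfold opNorm; rw [map_mul]; exact norm_mul_le _ _

lemma opNorm_nonneg (A : Matrix (Fin 2) (Fin 2) ℝ) : 0 ≤ opNorm A := norm_nonneg _

lemma opNorm_cont : Continuous opNorm := by
  unfold opNorm
  refine continuous_norm.comp ?_
  exact LinearMap.continuous_of_finiteDimensional
    ((Matrix.toEuclideanCLM (𝕜 := ℝ) (n := Fin 2)).toAlgEquiv.toLinearMap)

lemma clm_norm_sq (A : Matrix (Fin 2) (Fin 2) ℝ) (v : EuclideanSpace ℝ (Fin 2)) :
    ‖Matrix.toEuclideanCLM (𝕜 := ℝ) A v‖ ^ 2 =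
      (A 0 0 * v 0 + A 0 1 * v 1) ^ 2 + (A 1 0 * v 0 + A 1 1 * v 1) ^ 2 := by
  rw [EuclideanSpace.norm_sq_eq]
  simp [Fin.sum_univ_two, Matrix.mulVec, dotProduct]

lemma opNorm_vec (A : Matrix (Fin 2) (Fin 2) ℝ) (p q : ℝ) :
    (A 0 0 * p + A 0 1 * q) ^ 2 + (A 1 0 * p + A 1 1 * q) ^ 2 ≤ opNorm A ^ 2 * (p ^ 2 + q ^ 2) := by
  have h := clm_norm_sq A (!₂[p, q])
  have h2 := (Matrix.toEuclideanCLM (𝕜 := ℝ) A).le_opNorm (!₂[p, q])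
  have h3 : ‖(!₂[p, q] : EuclideanSpace ℝ (Fin 2))‖ ^ 2 = p ^ 2 + q ^ 2 := by
    rw [EuclideanSpace.norm_sq_eq]; simp [Fin.sum_univ_two]
  have h' : ‖Matrix.toEuclideanCLM (𝕜 := ℝ) A !₂[p, q]‖ ^ 2 =
      (A 0 0 * p + A 0 1 * q) ^ 2 + (A 1 0 * p + A 1 1 * q) ^ 2 := h
  rw [← h', ← h3, ← mul_pow]
  exact pow_le_pow_left₀ (norm_nonneg _) h2 2

lemma opNorm_le {A : Matrix (Fin 2) (Fin 2) ℝ} {K : ℝ} (hK : 0 ≤ K) (h : ∀ i j, |A i j| ≤ K) :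
    opNorm A ≤ 2 * K := by
  refine ContinuousLinearMap.opNorm_le_bound _ (by positivity) fun v => ?_
  refine abs_le_of_sq_le_sq' ?_ (by positivity) |>.2
  rw [clm_norm_sq, mul_pow, EuclideanSpace.norm_sq_eq, Fin.sum_univ_two]
  simp only [Real.norm_eq_abs, sq_abs]
  have key : ∀ a b p q : ℝ, |a| ≤ K → |b| ≤ K → (a * p + b * q) ^ 2 ≤ 2 * K ^ 2 * (p ^ 2 + q ^ 2) := by
    intro a b p q ha hb
    have ha' := sq_le_sq' (abs_le.1 ha).1 (abs_le.1 ha).2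
    have hb' := sq_le_sq' (abs_le.1 hb).1 (abs_le.1 hb).2
    have := mul_le_mul_of_nonneg_right ha' (sq_nonneg p)
    have := mul_le_mul_of_nonneg_right hb' (sq_nonneg q)
    nlinarith [sq_nonneg (a * p - b * q)]
  have := key _ _ (v 0) (v 1) (h 0 0) (h 0 1)
  have := key _ _ (v 0) (v 1) (h 1 0) (h 1 1)
  nlinarith

lemma one_le_opNorm {A : Matrix (Fin 2) (Fin 2) ℝ} (h : A.det = 1) : 1 ≤ opNorm A := by
  have h1 := opNorm_vec A 1 0
  have h2 := opNorm_vec A 0 1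
  have h0 := opNorm_nonneg A
  rw [Matrix.det_fin_two] at h
  by_contra hc
  push Not at hc
  have h3 : opNorm A ^ 2 < 1 := by nlinarith
  norm_num at h1 h2
  nlinarith [sq_nonneg (A 0 0 * A 0 1 + A 1 0 * A 1 1), sq_nonneg (A 0 0), sq_nonneg (A 0 1),
    sq_nonneg (A 1 0), sq_nonneg (A 1 1), sq_nonneg (A 0 0 - A 1 1), sq_nonneg (A 0 1 + A 1 0)]

lemma det_S (v : ℝ → ℝ) (x : ℝ) : (SchrodingerCocycle v x).det = 1 := by
  simp [SchrodingerCocycle, Matrix.det_fin_two]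

lemma det_coc (ω : ℝ) (v : ℝ → ℝ) (n : ℕ) (x : ℝ) :
    (cocycle ω (SchrodingerCocycle v) n x).det = 1 := by
  induction n with
  | zero => simp [cocycle]
  | succ n ih => rw [cocycle, Matrix.det_mul, ih, det_S, mul_one]

lemma one_le_coc (ω : ℝ) (v : ℝ → ℝ) (n : ℕ) (x : ℝ) :
    1 ≤ opNorm (cocycle ω (SchrodingerCocycle v) n x) := one_le_opNorm (det_coc ω v n x)

lemma S_cont {v : ℝ → ℝ} (hv : Continuous v) : Continuous (SchrodingerCocycle v) := by
  refine continuous_matrix fun i j => ?_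
  fin_cases i <;> fin_cases j <;> simp [SchrodingerCocycle] <;> fun_prop

lemma coc_cont {ω : ℝ} {v : ℝ → ℝ} (hv : Continuous v) (n : ℕ) :
    Continuous (cocycle ω (SchrodingerCocycle v) n) := by
  induction n with
  | zero => exact continuous_const
  | succ n ih =>
    have := S_cont hv
    show Continuous fun x => SchrodingerCocycle v (x + n * ω) * cocycle ω (SchrodingerCocycle v) n x
    exact Continuous.mul (this.comp (by fun_prop)) ih

lemma coc_per {ω : ℝ} {v : ℝ → ℝ} (hv : Function.Periodic v 1) (n : ℕ) (x : ℝ) :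
    cocycle ω (SchrodingerCocycle v) n (x + 1) = cocycle ω (SchrodingerCocycle v) n x := by
  induction n with
  | zero => rfl
  | succ n ih => rw [cocycle, cocycle, ih, SchrodingerCocycle, SchrodingerCocycle, per_shift hv]

lemma coc_add (ω : ℝ) (A : ℝ → Matrix (Fin 2) (Fin 2) ℝ) (m n : ℕ) (x : ℝ) :
    cocycle ω A (m + n) x = cocycle ω A m (x + n * ω) * cocycle ω A n x := by
  induction m with
  | zero => simp [cocycle]
  | succ m ih =>
    rw [show m + 1 + n = (m + n) + 1 by ring, cocycle, cocycle, ih, Matrix.mul_assoc]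
    congr 2; push_cast; ring

lemma logcoc_cont {ω : ℝ} {v : ℝ → ℝ} (hv : Continuous v) (n : ℕ) :
    Continuous fun x => Real.log (opNorm (cocycle ω (SchrodingerCocycle v) n x)) :=
  (opNorm_cont.comp (coc_cont hv n)).log fun x => (one_pos.trans_le (one_le_coc ω v n x)).ne'

lemma logcoc_nonneg (ω : ℝ) (v : ℝ → ℝ) (n : ℕ) (x : ℝ) :
    0 ≤ Real.log (opNorm (cocycle ω (SchrodingerCocycle v) n x)) :=
  Real.log_nonneg (one_le_coc ω v n x)

lemma LEn_nonneg (ω : ℝ) (v : ℝ → ℝ) (n : ℕ) : 0 ≤ LEn ω (SchrodingerCocycle v) n := by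
  unfold LEn
  exact mul_nonneg (by positivity) (intervalIntegral.integral_nonneg (by norm_num)
    fun x _ => logcoc_nonneg ω v n x)

/-- existence of the Lyapunov exponent -/
lemma LE_exists {ω : ℝ} {v : ℝ → ℝ} (hv : Continuous v) (hp : Function.Periodic v 1) :
    ∃ L : ℝ, Tendsto (fun m => LEn ω (SchrodingerCocycle v) m) atTop (nhds L) := by
  set u : ℕ → ℝ := fun n => ∫ x in (0:ℝ)..1, Real.log (opNorm (cocycle ω (SchrodingerCocycle v) n x))
  have hu : Subadditive u := by
    intro m n
    have h1 : u m = ∫ x in (0:ℝ)..1,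
        Real.log (opNorm (cocycle ω (SchrodingerCocycle v) m (x + n * ω))) := by
      rw [int_shift (g := fun x => Real.log (opNorm (cocycle ω (SchrodingerCocycle v) m x)))]
      intro x; simp only [coc_per hp]
    rw [h1]
    simp only [u]
    have hc := (logcoc_cont (ω := ω) hv m).comp (continuous_id.add (continuous_const (y := (n:ℝ) * ω)))
    rw [← intervalIntegral.integral_add]
    · refine intervalIntegral.integral_mono_on (by norm_num) ?_ ?_ ?_
      · exact (logcoc_cont hv _).intervalIntegrable _ _
      · exact (hc.add (logcoc_cont hv _)).intervalIntegrable _ _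
      · intro x _
        have a1 := one_le_coc ω v m (x + n * ω)
        have a2 := one_le_coc ω v n x
        have a3 := one_le_coc ω v (m + n) x
        rw [← Real.log_mul (by linarith) (by linarith)]
        apply Real.log_le_log (by linarith)
        rw [coc_add]; exact opNorm_mul_le _ _
    · exact hc.intervalIntegrable _ _
    · exact (logcoc_cont hv _).intervalIntegrable _ _
  have h0 : ∀ n, 0 ≤ u n := fun n => intervalIntegral.integral_nonneg (by norm_num)
    fun x _ => logcoc_nonneg ω v n x
  refine ⟨hu.lim, (hu.tendsto_lim ?_).congr fun n => ?_⟩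
  · refine ⟨0, ?_⟩
    rintro _ ⟨n, rfl⟩
    exact div_nonneg (h0 n) (by positivity)
  · simp only [LEn, u]; ring

/-- limits of finite Lyapunov exponents -/
lemma LEn_limit {ω s K : ℝ} {w : ℕ → ℝ → ℝ} {v : ℝ → ℝ} {n : ℕ} (hc : ∀ k, Continuous (w k))
    (hK : ∀ k x, |w k x| ≤ K) (hlim : ∀ x, Tendsto (fun k => w k x) atTop (nhds (v x)))
    (hs : ∀ k, s ≤ LEn ω (SchrodingerCocycle (w k)) n) : s ≤ LEn ω (SchrodingerCocycle v) n := by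
  have K0 : 0 ≤ K := (abs_nonneg _).trans (hK 0 0)
  have hS : ∀ x, Tendsto (fun k => SchrodingerCocycle (w k) x) atTop (nhds (SchrodingerCocycle v x)) := by
    intro x
    refine tendsto_pi_nhds.2 fun i => tendsto_pi_nhds.2 fun j => ?_
    fin_cases i <;> fin_cases j <;> simp [SchrodingerCocycle]
    exact hlim x
  have hC : ∀ (m : ℕ) x, Tendsto (fun k => cocycle ω (SchrodingerCocycle (w k)) m x) atTop
      (nhds (cocycle ω (SchrodingerCocycle v) m x)) := by
    intro m x
    induction m with
    | zero => exact tendsto_const_nhds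
    | succ m ih => exact (hS _).mul ih
  have hB : ∀ (m k : ℕ) x, opNorm (cocycle ω (SchrodingerCocycle (w k)) m x) ≤ (2 * (K + 1)) ^ (m + 1) := by
    intro m k x
    induction m with
    | zero =>
      rw [cocycle, pow_one]
      refine opNorm_le (by positivity) fun i j => ?_
      fin_cases i <;> fin_cases j <;> simp <;> linarith
    | succ m ih =>
      rw [cocycle, pow_succ']
      refine (opNorm_mul_le _ _).trans (mul_le_mul ?_ ih (opNorm_nonneg _) (by positivity))
      refine opNorm_le (by positivity) fun i j => ?_
      have := hK k (x + m * ω)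
      fin_cases i <;> fin_cases j <;> simp [SchrodingerCocycle] <;> linarith
  refine ge_of_tendsto' (x := atTop) (f := fun k => LEn ω (SchrodingerCocycle (w k)) n) ?_ hs
  unfold LEn
  refine Tendsto.const_mul _ ?_
  refine intervalIntegral.tendsto_integral_filter_of_dominated_convergence
    (fun _ => Real.log ((2 * (K + 1)) ^ (n + 1))) ?_ ?_ ?_ ?_
  · exact Eventually.of_forall fun k => (logcoc_cont (hc k) n).aestronglyMeasurable
  · refine Eventually.of_forall fun k => ae_of_all _ fun x _ => ?_
    rw [Real.norm_eq_abs, abs_of_nonneg (logcoc_nonneg _ _ _ _)]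
    exact Real.log_le_log (one_pos.trans_le (one_le_coc _ _ _ _)) (hB _ _ _)
  · exact intervalIntegrable_const
  · refine ae_of_all _ fun x _ => ?_
    refine Tendsto.log ((opNorm_cont.tendsto _).comp (hC n x)) ?_
    exact (one_pos.trans_le (one_le_coc _ _ _ _)).ne'

lemma S_conj {ω : ℝ} {f : ℝ → ℝ} (hf : ∀ x, 0 < f x) (n : ℕ) (x : ℝ) :
    cocycle ω (SchrodingerCocycle (wOf ω f)) n x * !![f (x - ω), -1; 1, 0] =
      !![f (x - ω + n * ω), -1; 1, 0] *
        !![PP ω f n (x - ω), -(PP ω f n (x - ω) * NN ω f n (x - ω)); 0, 1 / PP ω f n (x - ω)] := by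
  induction n with
  | zero => simp [cocycle, PP_zero, NN_zero]
  | succ n ih =>
    rw [cocycle, Matrix.mul_assoc, ih, ← Matrix.mul_assoc]
    have h1 := hf (x - ω + n * ω)
    have h2 := PP_pos (ω := ω) hf n (x - ω)
    rw [PP_succ, NN_succ, SchrodingerCocycle, wOf,
      show x + n * ω - ω = x - ω + n * ω by ring,
      show x - ω + ((n + 1 : ℕ) : ℝ) * ω = x + n * ω by push_cast; ring]
    generalize f (x - ω + n * ω) = F at h1
    ext i j
    fin_cases i <;> fin_cases j <;> simp [Matrix.mul_apply, Fin.sum_univ_two] <;> field_simp <;> ring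

lemma log_PP {ω : ℝ} {f : ℝ → ℝ} (hf : ∀ x, 0 < f x) (n : ℕ) (x : ℝ) :
    Real.log (PP ω f n x) = ∑ i ∈ Finset.range n, Real.log (f (x + i * ω)) := by
  rw [PP, Real.log_prod]; intro i _; exact (hf _).ne'

lemma logf_int_PP {ω : ℝ} {f : ℝ → ℝ} (hf : ∀ x, 0 < f x) (hc : Continuous f)
    (hp : Function.Periodic f 1) (n : ℕ) :
    ∫ x in (0:ℝ)..1, Real.log (PP ω f n (x - ω)) = n * ∫ x in (0:ℝ)..1, Real.log (f x) := by
  have hl : Continuous fun x => Real.log (f x) := hc.log fun x => (hf x).ne'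
  have hlp : Function.Periodic (fun x => Real.log (f x)) 1 := fun x => by simp only [hp x]
  simp_rw [log_PP hf]
  rw [intervalIntegral.integral_finsetSum]
  · rw [Finset.sum_congr rfl (g := fun _ => ∫ x in (0:ℝ)..1, Real.log (f x))]
    · simp
    · intro i _
      rw [← int_shift hlp (-ω + i * ω)]
      congr 1; funext x; congr 2; ring
  · intro i _
    exact (hl.comp (by fun_prop : Continuous fun x : ℝ => x - ω + i * ω)).intervalIntegrable _ _

lemma LEn_ge {ω : ℝ} {f : ℝ → ℝ} (hf : ∀ x, 0 < f x) (hc : Continuous f)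
    (hp : Function.Periodic f 1) {n : ℕ} (hn : 1 ≤ n) :
    ∫ x in (0:ℝ)..1, Real.log (f x) ≤ LEn ω (SchrodingerCocycle (wOf ω f)) n := by
  have hwc : Continuous (wOf ω f) := by
    unfold wOf
    exact hc.add (continuous_const.div (hc.comp (by fun_prop)) fun x => (hf _).ne')
  have hPc : Continuous fun x => Real.log (PP ω f n (x - ω)) :=
    ((PP_cont hc n).comp (by fun_prop)).log fun x => (PP_pos hf _ _).ne'
  let g : ℝ → ℝ := fun x => (1 / 2) * Real.log (f x ^ 2 + 1)
  have hgc : Continuous g := by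
    refine continuous_const.mul (Continuous.log (by fun_prop) fun x => ?_)
    positivity
  have hgp : Function.Periodic g 1 := fun x => by simp only [g, hp x]
  have key : ∀ x, Real.log (PP ω f n (x - ω)) + (g (x + (n * ω - ω)) - g (x + -ω)) ≤
      Real.log (opNorm (cocycle ω (SchrodingerCocycle (wOf ω f)) n x)) := by
    intro x
    have h1 := S_conj hf n x (ω := ω)
    set A := cocycle ω (SchrodingerCocycle (wOf ω f)) n x
    have h2 := opNorm_vec A (f (x - ω)) 1
    have a0 := one_le_coc ω (wOf ω f) n x
    have e0 := congrFun (congrFun h1 0) 0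
    have e1 := congrFun (congrFun h1 1) 0
    simp [Matrix.mul_apply, Fin.sum_univ_two] at e0 e1
    rw [mul_one, mul_one, e0, e1] at h2
    have hP := PP_pos (ω := ω) hf n (x - ω)
    have h3 := Real.log_le_log (by positivity) h2
    have e : (f (x - ω + n * ω) * PP ω f n (x - ω)) ^ 2 + PP ω f n (x - ω) ^ 2 =
      PP ω f n (x - ω) ^ 2 * (f (x - ω + n * ω) ^ 2 + 1) := by ring
    have a1 : (opNorm A) ^ 2 ≠ 0 := by
      have : 1 ≤ opNorm A := a0
      positivity
    rw [e, Real.log_mul (by positivity) (by positivity), Real.log_mul a1 (by positivity),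
      Real.log_pow, Real.log_pow] at h3
    simp only [g]
    rw [show x + (n * ω - ω) = x - ω + n * ω by ring, ← sub_eq_add_neg]
    push_cast at h3
    rw [one_pow] at h3
    linarith
  have h4 := intervalIntegral.integral_mono_on (a := 0) (b := 1) (μ := volume) (by norm_num)
    (Continuous.intervalIntegrable (by fun_prop) _ _)
    ((logcoc_cont (ω := ω) hwc n).intervalIntegrable _ _) fun x _ => key x
  rw [intervalIntegral.integral_add, intervalIntegral.integral_sub, int_shift hgp, int_shift hgp,
    logf_int_PP hf hc hp, sub_self, add_zero] at h4
  · unfold LEn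
    have hn' : (0 : ℝ) < n := by exact_mod_cast hn
    rw [one_div, ← div_eq_inv_mul, le_div_iff₀ hn']
    linarith
  all_goals apply Continuous.intervalIntegrable; fun_prop

/-- uniform equidistribution -/
lemma weyl_cplx {ω : ℝ} (hω : Irrational ω) (G : C(AddCircle (1:ℝ), ℂ)) (ε : ℝ) (hε : 0 < ε) :
    ∃ (c : ℝ) (m : ℂ), 0 ≤ c ∧ ∀ (j : ℕ) (x : ℝ),
      ‖(∑ i ∈ Finset.range j, G ((x + i * ω : ℝ) : AddCircle (1:ℝ))) - j * m‖ ≤ ε * j + c := by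
  have hG : G ∈ (Submodule.span ℂ (Set.range (@fourier 1))).topologicalClosure := by
    rw [span_fourier_closure_eq_top]; trivial
  obtain ⟨P, hPG, hP⟩ := Metric.mem_closure_iff.1 hG (ε / 2) (by positivity)
  have hPs : ∀ P ∈ Submodule.span ℂ (Set.range (@fourier (1:ℝ))), ∃ (c : ℝ) (m : ℂ), 0 ≤ c ∧
      ∀ (j : ℕ) (x : ℝ),
      ‖(∑ i ∈ Finset.range j, P ((x + i * ω : ℝ) : AddCircle (1:ℝ))) - j * m‖ ≤ c := by
    intro P hP
    induction hP using Submodule.span_induction with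
    | mem P hP =>
      obtain ⟨k, rfl⟩ := hP
      by_cases hk : k = 0
      · subst hk
        refine ⟨0, 1, le_rfl, fun j x => ?_⟩
        simp
      · set z : ℂ := Complex.exp (2 * π * Complex.I * k * ω) with hz
        have hz1 : z ≠ 1 := by
          intro h
          rw [hz, Complex.exp_eq_one_iff] at h
          obtain ⟨n, hn⟩ := h
          have h2 : (2 * π * Complex.I : ℂ) ≠ 0 := Complex.two_pi_I_ne_zero
          have h3 : (k : ℂ) * ω = n := by
            apply mul_left_cancel₀ h2; rw [← mul_assoc, hn]; ring
          have h4 : (k : ℝ) * ω = n := by exact_mod_cast h3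
          exact (hω.intCast_mul hk).ne_int n h4
        have hzn : ‖z‖ = 1 := by
          rw [hz, show (2 * π * Complex.I * k * ω : ℂ) = ((2 * π * k * ω : ℝ) : ℂ) * Complex.I by
            push_cast; ring]
          exact Complex.norm_exp_ofReal_mul_I _
        refine ⟨2 / ‖z - 1‖, 0, by positivity, fun j x => ?_⟩
        have e : ∀ i : ℕ, fourier k ((x + i * ω : ℝ) : AddCircle (1:ℝ)) =
            fourier k (x : AddCircle (1:ℝ)) * z ^ i := by
          intro i
          rw [fourier_coe_apply, fourier_coe_apply, hz, ← Complex.exp_nat_mul, ← Complex.exp_add]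
          congr 1; push_cast; ring
        simp_rw [e]
        rw [← Finset.mul_sum, geom_sum_eq hz1, mul_zero, sub_zero, norm_mul, norm_div]
        have h5 : ‖fourier k (x : AddCircle (1:ℝ))‖ = 1 := by
          rw [fourier_apply]; exact Circle.norm_coe _
        rw [h5, one_mul]
        gcongr
        calc ‖z ^ j - 1‖ ≤ ‖z ^ j‖ + ‖(1:ℂ)‖ := norm_sub_le _ _
          _ = 2 := by rw [norm_pow, hzn]; norm_num
    | zero => exact ⟨0, 0, le_rfl, fun j x => by simp⟩
    | add P Q _ _ hP hQ =>
      obtain ⟨c, m, h0, h⟩ := hP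
      obtain ⟨c', m', h0', h'⟩ := hQ
      refine ⟨c + c', m + m', by positivity, fun j x => ?_⟩
      refine le_trans (le_of_eq ?_) ((norm_add_le _ _).trans (add_le_add (h j x) (h' j x)))
      congr 1
      simp only [ContinuousMap.add_apply, Finset.sum_add_distrib]; ring
    | smul a P _ hP =>
      obtain ⟨c, m, h0, h⟩ := hP
      refine ⟨‖a‖ * c, a * m, by positivity, fun j x => ?_⟩
      refine le_trans (le_of_eq ?_) (mul_le_mul_of_nonneg_left (h j x) (norm_nonneg a))
      rw [← norm_mul]
      congr 1
      simp only [ContinuousMap.smul_apply, smul_eq_mul, ← Finset.mul_sum]; ring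
  obtain ⟨c, m, h0, h⟩ := hPs P hPG
  refine ⟨c, m, h0, fun j x => ?_⟩
  have e : (∑ i ∈ Finset.range j, G ((x + i * ω : ℝ) : AddCircle (1:ℝ))) - j * m =
    (∑ i ∈ Finset.range j, (G - P) ((x + i * ω : ℝ) : AddCircle (1:ℝ))) +
    ((∑ i ∈ Finset.range j, P ((x + i * ω : ℝ) : AddCircle (1:ℝ))) - j * m) := by
    simp only [ContinuousMap.sub_apply, Finset.sum_sub_distrib]; ring
  rw [e]
  refine (norm_add_le _ _).trans (add_le_add ?_ (h j x))
  refine (norm_sum_le_of_le _ (fun i _ => ContinuousMap.norm_coe_le_norm _ _)).trans ?_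
  rw [dist_eq_norm] at hP
  simp
  have : (0:ℝ) ≤ j := by positivity
  nlinarith

lemma weyl_real {ω : ℝ} (hω : Irrational ω) {g : ℝ → ℝ} (hg : Continuous g)
    (hp : Function.Periodic g 1) (h0 : ∫ x in (0:ℝ)..1, g x = 0) (ε : ℝ) (hε : 0 < ε) :
    ∃ c : ℝ, 0 ≤ c ∧ ∀ (j : ℕ) (x : ℝ), abs (∑ i ∈ Finset.range j, g (x + i * ω)) ≤ ε * j + c := by
  let G : C(AddCircle (1:ℝ), ℂ) := ⟨fun y => ((hp.lift y : ℝ) : ℂ), by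
    refine Complex.continuous_ofReal.comp ?_
    exact continuous_coinduced_dom.2 hg⟩
  obtain ⟨c, m, hc, h⟩ := weyl_cplx hω G (ε / 2) (by positivity)
  have hGx : ∀ x : ℝ, G (x : AddCircle (1:ℝ)) = (g x : ℂ) := fun x => rfl
  simp_rw [hGx] at h
  -- real version
  have h2 : ∀ (j : ℕ) (x : ℝ), abs ((∑ i ∈ Finset.range j, g (x + i * ω)) - j * m.re) ≤ ε / 2 * j + c := by
    intro j x
    refine le_trans ?_ (h j x)
    have := Complex.abs_re_le_norm ((∑ i ∈ Finset.range j, (g (x + i * ω) : ℂ)) - j * m)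
    simpa using this
  have hm : abs m.re ≤ ε / 2 := by
    have h3 : ∀ j : ℕ, j * abs m.re ≤ ε / 2 * j + c := by
      intro j
      have e1 : ∫ x in (0:ℝ)..1, ((∑ i ∈ Finset.range j, g (x + i * ω)) - j * m.re) = -(j * m.re) := by
        rw [intervalIntegral.integral_sub, intervalIntegral.integral_finsetSum]
        · simp [int_shift hp, h0]
        · intro i _; apply Continuous.intervalIntegrable; fun_prop
        · apply Continuous.intervalIntegrable; fun_prop
        · exact intervalIntegrable_const
      have e2 := intervalIntegral.norm_integral_le_of_norm_le_const (a := 0) (b := 1)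
        (C := ε / 2 * j + c)
        (f := fun x => (∑ i ∈ Finset.range j, g (x + i * ω)) - j * m.re) fun x _ => h2 j x
      rw [e1] at e2
      simpa [abs_mul] using e2
    by_contra hcon
    push Not at hcon
    obtain ⟨j, hj⟩ := exists_nat_gt (c / (abs m.re - ε / 2))
    rw [div_lt_iff₀ (by linarith)] at hj
    have := h3 j
    nlinarith
  refine ⟨c, hc, fun j x => ?_⟩
  have a1 := h2 j x
  have hj : (0:ℝ) ≤ j := by positivity
  rw [abs_le] at a1 hm ⊢
  constructor <;> nlinarith

lemma LE_zero {ω : ℝ} (hω : Irrational ω) {f : ℝ → ℝ} (hf : ∀ x, 0 < f x) (hc : Continuous f)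
    (hp : Function.Periodic f 1) (h0 : ∫ x in (0:ℝ)..1, Real.log (f x) = 0)
    {K : ℝ} (hK : ∀ x, f x ≤ K) :
    Tendsto (fun m => LEn ω (SchrodingerCocycle (wOf ω f)) m) atTop (nhds 0) := by
  have hl : Continuous fun x => Real.log (f x) := hc.log fun x => (hf x).ne'
  have hlp : Function.Periodic (fun x => Real.log (f x)) 1 := fun x => by simp only [hp x]
  have hwc : Continuous (wOf ω f) := by
    unfold wOf
    exact hc.add (continuous_const.div (hc.comp (by fun_prop)) fun x => (hf _).ne')
  set K' := max K 1
  have hK1 : 1 ≤ K' := le_max_right _ _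
  have hK' : ∀ x, |f x| ≤ K' := fun x => by
    rw [abs_of_pos (hf x)]; exact (hK x).trans (le_max_left _ _)
  -- main upper bound
  have up : ∀ ε > 0, ∃ D : ℝ, ∀ n : ℕ, 1 ≤ n → LEn ω (SchrodingerCocycle (wOf ω f)) n ≤
      (D + Real.log (n + 1)) / n + 3 * ε := by
    intro ε hε
    obtain ⟨c, hc0, h⟩ := weyl_real hω hl hlp h0 ε hε
    refine ⟨Real.log (8 * K' ^ 2) + 3 * c, fun n hn => ?_⟩
    have hn' : (0 : ℝ) < n := by exact_mod_cast hn
    have hub : ∀ x, Real.log (opNorm (cocycle ω (SchrodingerCocycle (wOf ω f)) n x)) ≤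
        Real.log (8 * K' ^ 2) + Real.log (n + 1) + 3 * (ε * n + c) := by
      intro x
      set e := ε * n + c with he
      have e0 : 0 ≤ e := by positivity
      have hP1 : ∀ i ≤ n, ∀ y, PP ω f i y ≤ Real.exp e := by
        intro i hi y
        have hi' : (i : ℝ) ≤ n := by exact_mod_cast hi
        rw [← Real.log_le_iff_le_exp (PP_pos hf _ _), log_PP hf]
        have := (abs_le.1 (h i y)).2
        nlinarith
      have hP2 : ∀ i ≤ n, ∀ y, 1 / PP ω f i y ≤ Real.exp e := by
        intro i hi y
        have hi' : (i : ℝ) ≤ n := by exact_mod_cast hi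
        have hpos := PP_pos (ω := ω) hf i y
        rw [← Real.log_le_iff_le_exp (by positivity), one_div, Real.log_inv, log_PP hf]
        have := (abs_le.1 (h i y)).1
        nlinarith
      have hN : ∀ y, PP ω f n y * NN ω f n y ≤ n * Real.exp e ^ 3 := by
        intro y
        have : NN ω f n y ≤ n * (Real.exp e * Real.exp e) := by
          unfold NN
          refine (Finset.sum_le_card_nsmul _ _ (Real.exp e * Real.exp e) ?_).trans (by simp)
          intro i hi
          have hi := Finset.mem_range.1 hi
          have a1 := hP2 i hi.le y
          have a2 := hP2 (i + 1) hi y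
          have p1 := PP_pos (ω := ω) hf i y
          have p2 := PP_pos (ω := ω) hf (i + 1) y
          calc 1 / (f (y + i * ω) * PP ω f i y ^ 2) = (1 / PP ω f i y) * (1 / PP ω f (i + 1) y) := by
                rw [PP_succ]; field_simp
            _ ≤ _ := by gcongr
        have a1 := hP1 n le_rfl y
        have a2 := NN_nonneg (ω := ω) hf n y
        have a3 := PP_pos (ω := ω) hf n y
        calc _ ≤ Real.exp e * (n * (Real.exp e * Real.exp e)) := by gcongr
          _ = _ := by ring
      have hA : cocycle ω (SchrodingerCocycle (wOf ω f)) n x =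
          !![f (x - ω + n * ω), -1; 1, 0] *
            (!![PP ω f n (x - ω), -(PP ω f n (x - ω) * NN ω f n (x - ω)); 0, 1 / PP ω f n (x - ω)] *
             !![0, 1; -1, f (x - ω)]) := by
        rw [← Matrix.mul_assoc, ← S_conj hf, Matrix.mul_assoc]
        have : !![f (x - ω), -1; 1, 0] * !![0, 1; -1, f (x - ω)] = (1 : Matrix (Fin 2) (Fin 2) ℝ) := by
          ext i j
          fin_cases i <;> fin_cases j <;> simp [Matrix.mul_apply, Fin.sum_univ_two]
        rw [this, mul_one]
      have n1 : opNorm !![f (x - ω + n * ω), -1; 1, 0] ≤ 2 * K' := by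
        refine opNorm_le (by positivity) fun i j => ?_
        have := hK' (x - ω + n * ω)
        fin_cases i <;> fin_cases j <;> simp <;> linarith
      have n3 : opNorm !![0, 1; -1, f (x - ω)] ≤ 2 * K' := by
        refine opNorm_le (by positivity) fun i j => ?_
        have := hK' (x - ω)
        fin_cases i <;> fin_cases j <;> simp <;> linarith
      have n2 : opNorm !![PP ω f n (x - ω), -(PP ω f n (x - ω) * NN ω f n (x - ω)); 0,
          1 / PP ω f n (x - ω)] ≤ 2 * ((n + 1) * Real.exp e ^ 3) := by
        have e1 : Real.exp e ≤ Real.exp e ^ 3 := le_self_pow₀ (Real.one_le_exp e0) (by norm_num)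
        have e2 : 0 ≤ n * Real.exp e ^ 3 := by positivity
        have e3 : 0 ≤ Real.exp e ^ 3 := by positivity
        have b1 := hP1 n le_rfl (x - ω)
        have b2 := hP2 n le_rfl (x - ω)
        have b3 := hN (x - ω)
        have a2 := NN_nonneg (ω := ω) hf n (x - ω)
        have a3 := PP_pos (ω := ω) hf n (x - ω)
        rw [one_div] at b2
        refine opNorm_le (by positivity) fun i j => ?_
        fin_cases i <;> fin_cases j <;>
          simp [abs_mul, abs_of_pos a3, abs_of_nonneg a2] <;> nlinarith
      have n4 : opNorm (cocycle ω (SchrodingerCocycle (wOf ω f)) n x) ≤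
          8 * K' ^ 2 * (n + 1) * Real.exp e ^ 3 := by
        rw [hA]
        refine (opNorm_mul_le _ _).trans ?_
        have t := (opNorm_mul_le !![PP ω f n (x - ω), -(PP ω f n (x - ω) * NN ω f n (x - ω)); 0,
          1 / PP ω f n (x - ω)] !![0, 1; -1, f (x - ω)]).trans
          (mul_le_mul n2 n3 (opNorm_nonneg _) (by positivity))
        refine (mul_le_mul n1 t (opNorm_nonneg _) (by positivity)).trans (le_of_eq (by ring))
      refine (Real.log_le_log (one_pos.trans_le (one_le_coc _ _ _ _)) n4).trans (le_of_eq ?_)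
      rw [Real.log_mul (by positivity) (by positivity), Real.log_mul (by positivity) (by positivity),
        Real.log_pow, Real.log_exp]
      push_cast; ring
    have h4 := intervalIntegral.integral_mono_on (a := 0) (b := 1) (μ := volume) (by norm_num)
      ((logcoc_cont (ω := ω) hwc n).intervalIntegrable _ _) intervalIntegrable_const
      fun x _ => hub x
    rw [intervalIntegral.integral_const] at h4
    unfold LEn
    rw [one_div, ← div_eq_inv_mul, div_add' _ _ _ hn'.ne']
    gcongr
    simp at h4 ⊢
    linarith
  rw [Metric.tendsto_atTop]
  intro ε hε
  obtain ⟨D, hD⟩ := up (ε / 6) (by positivity)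
  have ht : Tendsto (fun n : ℕ => (D + Real.log ((n:ℝ) + 1)) / n) atTop (nhds 0) := by
    have t1 : Tendsto (fun n : ℕ => Real.log ((n:ℝ) + 1) / ((n:ℝ) + 1)) atTop (nhds 0) := by
      have := (Real.isLittleO_log_id_atTop.tendsto_div_nhds_zero).comp
        (tendsto_natCast_atTop_atTop.comp (tendsto_add_atTop_nat 1) :
          Tendsto (fun n : ℕ => ((n + 1 : ℕ) : ℝ)) atTop atTop)
      refine this.congr fun n => ?_
      simp
    have t2 : Tendsto (fun n : ℕ => ((n:ℝ) + 1) / n) atTop (nhds 1) := by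
      have := (tendsto_one_div_atTop_nhds_zero_nat (𝕜 := ℝ)).const_add 1
      rw [add_zero] at this
      refine this.congr' ?_
      filter_upwards [eventually_ge_atTop 1] with n hn
      have : (0:ℝ) < n := by exact_mod_cast hn
      field_simp
    have t3 := (tendsto_const_div_atTop_nhds_zero_nat D).add (t1.mul t2)
    rw [zero_mul, add_zero] at t3
    refine t3.congr' ?_
    filter_upwards [eventually_ge_atTop 1] with n hn
    have : (0:ℝ) < n := by exact_mod_cast hn
    field_simp
  rw [Metric.tendsto_atTop] at ht
  obtain ⟨N, hN⟩ := ht (ε / 2) (by positivity)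
  refine ⟨max N 1, fun n hn => ?_⟩
  have a1 := hN n ((le_max_left _ _).trans hn)
  have a2 := hD n ((le_max_right _ _).trans hn)
  have a3 := LEn_nonneg ω (wOf ω f) n
  rw [Real.dist_eq, sub_zero] at a1 ⊢
  rw [abs_of_nonneg a3]
  have := (abs_lt.1 a1).2
  linarith

noncomputable def KK (l : ℕ) (B : ℝ) : ℝ := 100 * (2 ^ l) ^ 3 * B

/-- the constants of the construction -/
structure Consts (ω η M' B X0 : ℝ) (l : ℕ) : Prop where
  irr : Irrational ω
  η0 : 0 < η
  η1 : η ≤ 1 / 6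
  B1 : 1 ≤ B
  M1 : 1 ≤ M'
  X1 : 1 ≤ X0
  nt : ∀ X : ℝ, 1 ≤ X → ∃ R : ℕ, ∃ ℓ : ℝ, X ≤ R ∧ R ≤ M' * X ∧ 0 < ℓ ∧
    (∀ j : ℕ, 1 ≤ j → j ≤ R → ∀ m : ℤ, ℓ ≤ |(j : ℝ) * ω - m|) ∧
    1 / 2 + η ≤ (R + 1) * ℓ ∧ (R + 1) * ℓ ≤ 1
  bump : ∀ ℓ : ℝ, 0 < ℓ → ℓ ≤ 1 → ∃ χ : ℝ → ℝ, Function.Periodic χ 1 ∧ (∀ x, 0 ≤ χ x) ∧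
    (∀ x, χ x ≤ 1) ∧ Dom l (B / ℓ) χ (nbInd ((1 - η / 8) / 2 * ℓ)) ∧
    (∀ x : ℝ, |x - round x| ≤ (1 - η / 4) / 2 * ℓ → χ x = 1) ∧
    2 * ((1 - η / 4) / 2) * ℓ ≤ ∫ x in (0:ℝ)..1, χ x ∧ ∫ x in (0:ℝ)..1, χ x ≤ ℓ
  big : ∀ y : ℝ, X0 ≤ y → 4 ≤ y ∧ 3 * KK l B ≤ y ∧ 8 / η ≤ √y ∧ 5 * √y + 2 ≤ η * y / 2 ∧
    (6 * KK l B * (M' * y ^ 4) ^ 3) ^ l * (2 * Real.exp (1 - √y)) ≤ 1 / y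

lemma consts_exist {ω : ℝ} (hω : Irrational ω) {M : ℝ} (hM : 1 ≤ M)
    (hbt : ∀ k : ℕ, cfDen ω (k + 1) ≤ M * cfDen ω k) (l : ℕ) :
    ∃ η M' B X0, Consts ω η M' B X0 l := by
  obtain ⟨M', hM1, hnt⟩ := nt_main ω hω M hM hbt
  set η : ℝ := 1 / (2 * (2 * M + 1)) with hη
  have η0 : 0 < η := by positivity
  have η1 : η ≤ 1 / 6 := by
    rw [hη]; apply one_div_le_one_div_of_le <;> linarith
  obtain ⟨B, hB1, hB⟩ := bump_exists l ((1 - η / 4) / 2) ((1 - η / 8) / 2) (by linarith)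
    (by linarith) (by linarith)
  have hs : Tendsto (fun y : ℝ => √y) atTop atTop := Real.tendsto_sqrt_atTop
  have t1 : ∀ᶠ y : ℝ in atTop, 5 * √y + 2 ≤ η * y / 2 := by
    filter_upwards [hs.eventually_ge_atTop (14 / η), hs.eventually_ge_atTop 1,
      eventually_ge_atTop 0] with y h1 h2 h3
    rw [div_le_iff₀ η0] at h1
    have := Real.sq_sqrt h3
    nlinarith
  have t2 : ∀ᶠ y : ℝ in atTop,
      (6 * KK l B * (M' * y ^ 4) ^ 3) ^ l * (2 * Real.exp (1 - √y)) ≤ 1 / y := by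
    have h := ((Real.tendsto_pow_mul_exp_neg_atTop_nhds_zero (24 * l + 2)).comp hs).const_mul
      ((6 * KK l B * M' ^ 3) ^ l * (2 * Real.exp 1))
    rw [mul_zero] at h
    filter_upwards [h.eventually_le_const one_pos, eventually_gt_atTop 0] with y h1 h2
    rw [le_div_iff₀ h2]
    refine le_trans (le_of_eq ?_) h1
    have e1 : √y ^ (24 * l + 2) = y ^ (12 * l) * y := by
      rw [show 24 * l + 2 = 2 * (12 * l + 1) by ring, pow_mul, Real.sq_sqrt h2.le, pow_succ]
    simp only [Function.comp]
    rw [e1, sub_eq_add_neg, Real.exp_add,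
      show 6 * KK l B * (M' * y ^ 4) ^ 3 = 6 * KK l B * M' ^ 3 * y ^ 12 by ring, mul_pow, ← pow_mul]
    ring
  obtain ⟨X0, hX0⟩ := eventually_atTop.1 ((eventually_ge_atTop (4:ℝ)).and
    ((eventually_ge_atTop (3 * KK l B)).and ((hs.eventually_ge_atTop (8 / η)).and (t1.and t2))))
  refine ⟨η, M', B, max X0 1, hω, η0, η1, hB1, hM1, le_max_right _ _, hnt, hB, fun y hy => ?_⟩
  exact hX0 y ((le_max_left _ _).trans hy)

structure Stage (ω η B X0 : ℝ) (l : ℕ) (R : ℕ) (ℓ : ℝ) (χ f : ℝ → ℝ) : Prop where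
  RX : X0 ≤ R
  ℓ0 : 0 < ℓ
  nt : ∀ j : ℕ, 1 ≤ j → j ≤ R → ∀ m : ℤ, ℓ ≤ |(j : ℝ) * ω - m|
  Rℓ1 : 1 / 2 + η ≤ (R + 1) * ℓ
  Rℓ2 : (R + 1) * ℓ ≤ 1
  χp : Function.Periodic χ 1
  χ0 : ∀ x, 0 ≤ χ x
  χ1 : ∀ x, χ x ≤ 1
  χd : Dom l (B / ℓ) χ (nbInd ((1 - η / 8) / 2 * ℓ))
  χo : ∀ x : ℝ, |x - round x| ≤ (1 - η / 4) / 2 * ℓ → χ x = 1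
  χi : 2 * ((1 - η / 4) / 2) * ℓ ≤ ∫ x in (0:ℝ)..1, χ x
  χI : ∫ x in (0:ℝ)..1, χ x ≤ ℓ
  fpos : ∀ x, 0 < f x
  fp : Function.Periodic f 1
  fe : ∀ x, f x ≤ Real.exp 1
  fd : Dom l R f f
  gr : ∀ (j : ℕ) (x : ℝ), Real.exp ((1 - (η / 4 - 2 / √R)) * j - 2 * √R) ≤ PP ω f j x
  s : 1 - (η / 4 - 2 / √R) ≤ ∫ x in (0:ℝ)..1, Real.log (f x)

namespace Stage
variable {ω η M' B X0 ℓ : ℝ} {l R : ℕ} {χ f : ℝ → ℝ}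

lemma R4 (P : Consts ω η M' B X0 l) (S : Stage ω η B X0 l R ℓ χ f) : (4:ℝ) ≤ R :=
  (P.big R S.RX).1

lemma hyp (P : Consts ω η M' B X0 l) (S : Stage ω η B X0 l R ℓ χ f) {κ : ℝ} (hκ : 0 ≤ κ) :
    StepHyp ω f χ κ R where
  fpos := S.fpos
  R1 := by have := R4 P S; exact_mod_cast (by linarith : (1:ℝ) ≤ R)
  k0 := hκ
  c0 := S.χ0
  c1 := S.χ1
  dis := dis_of_nt (by linarith [P.η0]) S.ℓ0 S.χd S.nt

lemma fc (S : Stage ω η B X0 l R ℓ χ f) : Continuous f := S.fd.1.continuous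
lemma χc (S : Stage ω η B X0 l R ℓ χ f) : Continuous χ := S.χd.1.continuous

/-- difference of potentials -/
lemma wd (P : Consts ω η M' B X0 l) (S : Stage ω η B X0 l R ℓ χ f) {κ Q : ℝ} (hκ : 0 ≤ κ)
    (hκ2 : κ ≤ 2 * (R + 1) * (1 - η / 2)) (hQ : X0 ≤ Q) (hQ1 : Q ≤ R) (hQR : R ≤ M' * Q ^ 4)
    (hd : ∀ x : ℝ, |x - round x| ≤ (1 - η / 8) / 2 * ℓ → 1 / NN ω f R x ≤ Real.exp (1 - √Q)) :
    ContDiff ℝ l (stepf ω f χ κ R) ∧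
    ContDiff ℝ l (fun x => wOf ω (stepf ω f χ κ R) x - wOf ω f x) ∧
    ∀ m ≤ l, ∀ x, |iteratedDeriv m (fun x => wOf ω (stepf ω f χ κ R) x - wOf ω f x) x| ≤ 1 / Q := by
  have H := hyp P S hκ
  have h4 := R4 P S
  obtain ⟨c1, c2, c3⟩ := step_est H (by positivity) S.fd P.B1 S.ℓ0
    (by linarith [S.Rℓ1, P.η0]) S.χd S.fe S.gr (Real.exp_pos _).le hd
  refine ⟨c1.1, c2, fun m hm x => (c3 m hm x).trans ?_⟩
  obtain ⟨b1, b2, b3, b4, -⟩ := P.big R S.RX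
  obtain ⟨q1, q2, q3, q4, q5⟩ := P.big Q hQ
  refine le_trans ?_ q5
  have η0 := P.η0
  have hB := P.B1
  have hK0 : 0 ≤ KK l B := by unfold KK; positivity
  have hE : 100 * (2 ^ l) ^ 3 * B * R ^ 2 * (1 + κ + R) ≤ 6 * KK l B * (M' * Q ^ 4) ^ 3 := by
    have e1 : 1 + κ + R ≤ 6 * R := by nlinarith
    calc 100 * (2 ^ l) ^ 3 * B * R ^ 2 * (1 + κ + R) = KK l B * R ^ 2 * (1 + κ + R) := by rw [KK]
      _ ≤ KK l B * R ^ 2 * (6 * R) := by gcongr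
      _ = 6 * KK l B * R ^ 3 := by ring
      _ ≤ _ := by gcongr
  have hx : Real.exp (1 + κ - 2 * ((1 - (η / 4 - 2 / √R)) * R - 2 * √R)) ≤ Real.exp (1 - √Q) := by
    apply Real.exp_le_exp.2
    have s1 : √Q ≤ √R := Real.sqrt_le_sqrt hQ1
    have s2 : 0 ≤ 2 / √R * R := by positivity
    nlinarith
  have : 0 ≤ 100 * (2 ^ l) ^ 3 * B * R ^ 2 * (1 + κ + R) := by positivity
  have hM1 := P.M1
  refine mul_le_mul (pow_le_pow_left₀ this hE l) (by linarith) (by positivity) (by positivity)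

lemma sle (S : Stage ω η B X0 l R ℓ χ f) : ∫ x in (0:ℝ)..1, Real.log (f x) ≤ 1 := by
  have h := intervalIntegral.integral_mono_on (a := 0) (b := 1) (μ := volume)
    (f := fun x => Real.log (f x)) (g := fun _ => 1) (by norm_num)
    ((S.fc.log fun x => (S.fpos x).ne').intervalIntegrable _ _) intervalIntegrable_const
    fun x _ => (Real.log_le_iff_le_exp (S.fpos x)).2 (S.fe x)
  simpa using h

lemma sge (P : Consts ω η M' B X0 l) (S : Stage ω η B X0 l R ℓ χ f) :
    1 / 2 ≤ ∫ x in (0:ℝ)..1, Real.log (f x) := by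
  have := S.s
  have h2 : 0 ≤ 2 / √R := by positivity
  linarith [P.η1]

/-- zero exponent perturbation -/
lemma zero (P : Consts ω η M' B X0 l) (S : Stage ω η B X0 l R ℓ χ f) {Q : ℝ}
    (hQ : X0 ≤ Q) (hQ1 : Q ≤ R) (hQR : R ≤ M' * Q ^ 4)
    (hd : ∀ x : ℝ, |x - round x| ≤ (1 - η / 8) / 2 * ℓ → 1 / NN ω f R x ≤ Real.exp (1 - √Q)) :
    ∃ w : ℝ → ℝ, Function.Periodic w 1 ∧ ContDiff ℝ l w ∧
      ContDiff ℝ l (fun x => w x - wOf ω f x) ∧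
      (∀ m ≤ l, ∀ x, |iteratedDeriv m (fun x => w x - wOf ω f x) x| ≤ 1 / Q) ∧
      Tendsto (fun m => LEn ω (SchrodingerCocycle w) m) atTop (nhds 0) := by
  have η0 := P.η0
  have η1 := P.η1
  have ℓ0 := S.ℓ0
  have i0 : 0 < ∫ x in (0:ℝ)..1, χ x := lt_of_lt_of_le (by
    have : 0 < 2 * ((1 - η / 4) / 2) := by linarith
    positivity) S.χi
  set κ := (∫ x in (0:ℝ)..1, Real.log (f x)) / ∫ x in (0:ℝ)..1, χ x with hκ
  have k0 : 0 ≤ κ := div_nonneg (by linarith [sge P S]) i0.le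
  have k1 : κ ≤ 2 * (R + 1) * (1 - η / 2) := by
    rw [hκ, div_le_iff₀ i0]
    refine S.sle.trans ?_
    have a1 := S.χi
    have a2 := S.Rℓ1
    have a3 : (0:ℝ) ≤ 2 * (R + 1) * (1 - η / 2) := by
      have : 0 ≤ 1 - η / 2 := by linarith
      positivity
    have a4 := mul_le_mul_of_nonneg_left a1 a3
    have a5 : (1 - η / 2) * (1 - η / 4) * (2 * (1 / 2 + η)) ≤
        (1 - η / 2) * (1 - η / 4) * (2 * ((R + 1) * ℓ)) := by
      have : 0 ≤ 1 - η / 2 := by linarith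
      have : 0 ≤ 1 - η / 4 := by linarith
      gcongr
    have a6 : 1 ≤ (1 - η / 2) * (1 - η / 4) * (2 * (1 / 2 + η)) := by
      nlinarith [mul_pos η0 η0, mul_pos η0 (mul_pos η0 η0)]
    nlinarith
  obtain ⟨c1, c2, c3⟩ := wd P S k0 k1 hQ hQ1 hQR hd
  have H := hyp P S k0
  refine ⟨wOf ω (stepf ω f χ κ R), wOf_periodic (stepf_periodic S.fp S.χp R),
    wOf_contDiff c1 H.stepf_pos, c2, c3, ?_⟩
  refine LE_zero P.irr H.stepf_pos c1.continuous (stepf_periodic S.fp S.χp R) ?_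
    (K := Real.exp 1) fun x => (H.stepf_le x).trans (S.fe x)
  rw [H.int_log S.fc S.χc S.fp S.χp, hκ, div_mul_cancel₀ _ i0.ne', sub_self]

/-- inductive step -/
lemma next (P : Consts ω η M' B X0 l) (S : Stage ω η B X0 l R ℓ χ f) :
    ∃ (R' : ℕ) (ℓ' : ℝ) (χ' : ℝ → ℝ), Stage ω η B X0 l R' ℓ' χ' (stepf ω f χ (√R) R) ∧
      2 * (R : ℝ) ≤ R' ∧ (R' : ℝ) ≤ M' * (R : ℝ) ^ 4 ∧
      ∀ x : ℝ, |x - round x| ≤ (1 - η / 8) / 2 * ℓ' →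
        1 / NN ω (stepf ω f χ (√R) R) R' x ≤ Real.exp (1 - √R) := by
  have η0 := P.η0
  have η1 := P.η1
  have ℓ0 := S.ℓ0
  have r4 := R4 P S
  have k0 : 0 ≤ √(R:ℝ) := Real.sqrt_nonneg _
  have H := hyp P S k0
  obtain ⟨b1, b2, b3, b4, -⟩ := P.big R S.RX
  obtain ⟨R', ℓ', h1, h2, h3, h4, h5, h6⟩ := P.nt ((R:ℝ) ^ 4) (one_le_pow₀ (by linarith))
  have hR' : 16 * (R:ℝ) ≤ R' := by nlinarith [mul_pos (show (0:ℝ) < R by linarith) (show (0:ℝ) < R by linarith), pow_le_pow_left₀ (by norm_num) r4 3]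
  have hsR : 2 * √(R:ℝ) ≤ √(R':ℝ) := by
    apply Real.le_sqrt_of_sq_le
    rw [mul_pow, Real.sq_sqrt (by positivity)]; linarith
  have hl1 : ℓ' ≤ 1 := by nlinarith
  obtain ⟨χ', p1, p2, p3, p4, p5, p6, p7⟩ := P.bump ℓ' h3 hl1
  have s0 : 0 < √(R:ℝ) := Real.sqrt_pos.2 (by linarith)
  have ss : √(R:ℝ) * √(R:ℝ) = R := Real.mul_self_sqrt (by linarith)
  have hs1 : √(R:ℝ) / (R + 1) ≤ 1 / √(R:ℝ) := by
    rw [div_le_div_iff₀ (by positivity) s0]; linarith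
  have hs2 : 2 / √(R':ℝ) ≤ 1 / √(R:ℝ) := by
    rw [div_le_div_iff₀ (by linarith) s0]; linarith
  have hs3 : 2 / √(R:ℝ) = 1 / √(R:ℝ) + 1 / √(R:ℝ) := by ring
  have hB := P.B1
  have hK0 : 0 ≤ KK l B := by unfold KK; positivity
  have hsle : √(R:ℝ) ≤ R := by nlinarith
  have hn : R ≤ R' := by exact_mod_cast (by linarith : (R:ℝ) ≤ R')
  refine ⟨R', ℓ', χ', ?_, by linarith, h2, ?_⟩
  · refine ⟨by linarith [S.RX], h3, h4, h5, h6, p1, p2, p3, p4, p5, p6, p7, H.stepf_pos,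
      stepf_periodic S.fp S.χp R, fun x => (H.stepf_le x).trans (S.fe x), ?_, ?_, ?_⟩
    · obtain ⟨c1, -, -⟩ := step_est H (d := Real.exp 1) (by positivity) S.fd P.B1 S.ℓ0
        (by linarith [S.Rℓ1, P.η0]) S.χd S.fe S.gr (Real.exp_pos _).le (fun y _ => by
          have a1 := NN_one_le (ω := ω) H.fpos H.R1 y
          have a2 := H.fpos y
          have a3 := NN_pos (ω := ω) H.fpos H.R1 y
          refine le_trans ?_ (S.fe y)
          rw [div_le_iff₀ a3]
          rw [div_le_iff₀ a2] at a1
          linarith)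
      refine c1.mono (by positivity) ?_ fun x => le_rfl
      refine le_trans ?_ h1
      calc 100 * (2 ^ l) ^ 3 * B * R ^ 2 * (1 + √(R:ℝ) + R) = KK l B * R ^ 2 * (1 + √(R:ℝ) + R) := by
            rw [KK]
        _ ≤ KK l B * R ^ 2 * (3 * R) := by gcongr; linarith
        _ = 3 * KK l B * R ^ 3 := by ring
        _ ≤ R * R ^ 3 := by gcongr
        _ = _ := by ring
    · intro j x
      refine le_trans ?_ (H.growth S.gr j x)
      apply Real.exp_le_exp.2
      have : (1 - (η / 4 - 2 / √(R':ℝ))) * j ≤ (1 - (η / 4 - 2 / √(R:ℝ) + √(R:ℝ) / (R + 1))) * j := by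
        gcongr
        linarith
      linarith
    · rw [H.int_log S.fc S.χc S.fp S.χp]
      have a1 : √(R:ℝ) * (∫ x in (0:ℝ)..1, χ x) ≤ √(R:ℝ) / (R + 1) := by
        rw [div_eq_mul_one_div]
        have : ℓ ≤ 1 / ((R:ℝ) + 1) := by
          rw [le_div_iff₀ (by positivity)]; linarith [S.Rℓ2]
        gcongr
        exact S.χI.trans this
      linarith [S.s]
  · intro x hx
    have hx1 : χ x = 1 := by
      apply S.χo x
      refine hx.trans ?_
      have a1 : ℓ' * (R' + 1) ≤ 1 := by linarith
      have a2 : 1 / 2 ≤ (R + 1) * ℓ := by linarith [S.Rℓ1]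
      have a3 : 4 * ℓ' ≤ ℓ := by
        by_contra hcon
        push Not at hcon
        have u1 : ((R:ℝ) + 1) * ℓ ≤ (R + 1) * (4 * ℓ') := by gcongr
        have u2 := mul_le_mul_of_nonneg_right hR' h3.le
        have u3 := mul_le_mul_of_nonneg_right r4 h3.le
        linarith
      nlinarith
    have a1 := H.NN_one hx1
    have a2 := NN_mono (ω := ω) H.stepf_pos hn x
    have a3 := NN_one_le (ω := ω) H.fpos H.R1 x
    have a4 := S.fe x
    have a5 := H.fpos x
    have a6 : Real.exp (√(R:ℝ) - 1) ≤ NN ω (stepf ω f χ (√R) R) R' x := by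
      refine le_trans ?_ a2
      rw [a1, sub_eq_add_neg, Real.exp_add]
      gcongr
      refine le_trans ?_ a3
      rw [Real.exp_neg, ← one_div]
      exact one_div_le_one_div_of_le a5 a4
    calc _ ≤ 1 / Real.exp (√(R:ℝ) - 1) := one_div_le_one_div_of_le (Real.exp_pos _) a6
      _ = _ := by rw [one_div, ← Real.exp_neg]; congr 1; ring

lemma base (P : Consts ω η M' B X0 l) :
    ∃ (R : ℕ) (ℓ : ℝ) (χ : ℝ → ℝ), Stage ω η B X0 l R ℓ χ (fun _ => Real.exp 1) := by
  obtain ⟨R, ℓ, h1, h2, h3, h4, h5, h6⟩ := P.nt X0 P.X1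
  have η0 := P.η0
  obtain ⟨b1, b2, b3, b4, -⟩ := P.big R h1
  have hl1 : ℓ ≤ 1 := by nlinarith
  obtain ⟨χ, p1, p2, p3, p4, p5, p6, p7⟩ := P.bump ℓ h3 hl1
  have s0 : 0 < √(R:ℝ) := Real.sqrt_pos.2 (by linarith)
  have hβ : 0 ≤ η / 4 - 2 / √(R:ℝ) := by
    rw [div_le_iff₀ η0] at b3
    have : 2 / √(R:ℝ) ≤ η / 4 := by
      rw [div_le_iff₀ s0]; linarith
    linarith
  refine ⟨R, ℓ, χ, h1, h3, h4, h5, h6, p1, p2, p3, p4, p5, p6, p7, fun _ => Real.exp_pos _,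
    fun _ => rfl, fun _ => le_rfl, ?_, ?_, ?_⟩
  · refine (Dom.const (C := (R:ℝ)) (by positivity) (Real.exp 1)).mono (by positivity) le_rfl fun x => ?_
    rw [abs_of_pos (Real.exp_pos _)]
  · intro j x
    simp only [PP, Finset.prod_const, Finset.card_range]
    rw [← Real.exp_nat_mul]
    apply Real.exp_le_exp.2
    have : 0 ≤ (η / 4 - 2 / √(R:ℝ)) * j := by positivity
    nlinarith
  · simp; linarith
end Stage

lemma series_limit {l : ℕ} {w : ℕ → ℝ → ℝ} (hw0 : ContDiff ℝ l (w 0))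
    (hd : ∀ n, ContDiff ℝ l (fun x => w (n + 1) x - w n x))
    (hb : ∀ n, ∀ m ≤ l, ∀ x, |iteratedDeriv m (fun x => w (n + 1) x - w n x) x| ≤ (1 / 2) ^ n) :
    ∃ v : ℝ → ℝ, ContDiff ℝ l v ∧ (∀ x, Tendsto (fun n => w n x) atTop (nhds (v x))) ∧
      ∀ n, ContDiff ℝ l (fun x => v x - w n x) ∧
        ∀ m ≤ l, ∀ x, |iteratedDeriv m (fun x => v x - w n x) x| ≤ 2 * (1 / 2) ^ n := by
  have hsum : ∀ n, HasSum (fun k : ℕ => ((1:ℝ) / 2) ^ (n + k)) (2 * (1 / 2) ^ n) := by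
    intro n
    have := (hasSum_geometric_two).mul_left (((1:ℝ) / 2) ^ n)
    simp_rw [← pow_add] at this
    rwa [mul_comm] at this
  have hfb : ∀ n (m : ℕ) (k : ℕ) (x : ℝ), (m : ℕ∞) ≤ (l : ℕ∞) →
      ‖iteratedFDeriv ℝ m (fun x => w (n + k + 1) x - w (n + k) x) x‖ ≤ (1 / 2) ^ (n + k) := by
    intro n m k x hm
    rw [norm_iteratedFDeriv_eq_norm_iteratedDeriv]
    exact hb (n + k) m (by exact_mod_cast hm) x
  let T : ℕ → ℝ → ℝ := fun n x => ∑' k, (w (n + k + 1) x - w (n + k) x)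
  have hT : ∀ n, ContDiff ℝ l (T n) := fun n =>
    contDiff_tsum (N := (l : ℕ∞)) (v := fun _ k => (1 / 2) ^ (n + k)) (fun k => hd (n + k))
      (fun _ _ => (hsum n).summable) fun m k x hm => hfb n m k x hm
  have hTd : ∀ n, ∀ m ≤ l, ∀ x, |iteratedDeriv m (T n) x| ≤ 2 * (1 / 2) ^ n := by
    intro n m hm x
    rw [← Real.norm_eq_abs, ← norm_iteratedFDeriv_eq_norm_iteratedDeriv]
    have e := iteratedFDeriv_tsum_apply (𝕜 := ℝ) (N := (l : ℕ∞)) (k := m)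
      (f := fun k x => w (n + k + 1) x - w (n + k) x)
      (v := fun _ k => (1 / 2) ^ (n + k)) (fun k => hd (n + k))
      (fun _ _ => (hsum n).summable) (fun m k x hm => hfb n m k x hm) (by exact_mod_cast hm) x
    show ‖iteratedFDeriv ℝ m (fun x => ∑' k, (w (n + k + 1) x - w (n + k) x)) x‖ ≤ _
    rw [e]
    exact tsum_of_norm_bounded (hsum n) fun k => hfb n m k x (by exact_mod_cast hm)
  have hsm : ∀ n x, Summable fun k => w (n + k + 1) x - w (n + k) x := by
    intro n x
    refine Summable.of_norm_bounded (hsum n).summable fun k => ?_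
    have := hb (n + k) 0 (Nat.zero_le _) x
    rwa [iteratedDeriv_zero] at this
  have hlim : ∀ x, Tendsto (fun n => w n x) atTop (nhds (w 0 x + T 0 x)) := by
    intro x
    have := ((hsm 0 x).hasSum.tendsto_sum_nat).const_add (w 0 x)
    refine this.congr fun n => ?_
    simp only [Nat.zero_add]
    rw [Finset.sum_range_sub (fun k => w k x)]; ring
  have hTn : ∀ n x, w 0 x + T 0 x - w n x = T n x := by
    intro n x
    have h1 := ((hsm n x).hasSum.tendsto_sum_nat).const_add (w n x)
    have h2 : Tendsto (fun k => w (n + k) x) atTop (nhds (w n x + T n x)) := by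
      refine h1.congr fun k => ?_
      have := Finset.sum_range_sub (fun k => w (n + k) x) k
      simp only [← Nat.add_assoc] at this
      rw [this]; simp
    have h3 := (hlim x).comp (tendsto_add_atTop_nat n)
    have h4 := tendsto_nhds_unique h2 (h3.congr fun k => by simp [Function.comp, add_comm])
    linarith
  refine ⟨fun x => w 0 x + T 0 x, hw0.add (hT 0), hlim, fun n => ?_⟩
  have e : (fun x => (w 0 x + T 0 x) - w n x) = T n := funext (hTn n)
  simp only [e]
  exact ⟨hT n, hTd n⟩

theorem schrodinger_positive_LE_not_Cl_open
    (ω : ℝ) (hω : Irrational ω)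
    (M : ℝ) (hM : 1 ≤ M) (hbt : ∀ k : ℕ, cfDen ω (k + 1) ≤ M * cfDen ω k)
    (l : ℕ) :
    ∃ v : ℝ → ℝ, Function.Periodic v 1 ∧ ContDiff ℝ l v ∧
      -- L(S_v) > 0
      (∃ L : ℝ, 0 < L ∧ Tendsto (fun m => LEn ω (SchrodingerCocycle v) m) atTop (nhds L)) ∧
      -- every C^l-neighborhood of v contains a potential with zero Lyapunov exponent
      (∀ δ : ℝ, 0 < δ → ∃ w : ℝ → ℝ, Function.Periodic w 1 ∧ ContDiff ℝ l w ∧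
        (∀ j ≤ l, ∀ x : ℝ, |iteratedDeriv j (fun y => w y - v y) x| < δ) ∧
        Tendsto (fun m => LEn ω (SchrodingerCocycle w) m) atTop (nhds 0)) := by
  obtain ⟨η, M', B, X0, P⟩ := consts_exist hω hM hbt l
  let St := {p : ℕ × ℝ × (ℝ → ℝ) × (ℝ → ℝ) // Stage ω η B X0 l p.1 p.2.1 p.2.2.1 p.2.2.2}
  have hnext : ∀ p : St, ∃ q : St, q.1.2.2.2 = stepf ω p.1.2.2.2 p.1.2.2.1 (√(p.1.1 : ℝ)) p.1.1 ∧
      2 * (p.1.1 : ℝ) ≤ q.1.1 ∧ (q.1.1 : ℝ) ≤ M' * (p.1.1 : ℝ) ^ 4 ∧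
      ∀ x : ℝ, |x - round x| ≤ (1 - η / 8) / 2 * q.1.2.1 →
        1 / NN ω q.1.2.2.2 q.1.1 x ≤ Real.exp (1 - √(p.1.1 : ℝ)) := by
    rintro ⟨⟨R, ℓ, χ, f⟩, S⟩
    obtain ⟨R', ℓ', χ', S', h1, h2, h3⟩ := Stage.next P S
    exact ⟨⟨⟨R', ℓ', χ', _⟩, S'⟩, rfl, h1, h2, h3⟩
  choose F hF1 hF2 hF3 hF4 using hnext
  obtain ⟨R0, ℓ0, χ0, S0⟩ := Stage.base P
  let st : ℕ → St := fun n => Nat.rec (motive := fun _ => St) ⟨⟨R0, ℓ0, χ0, _⟩, S0⟩ (fun _ p => F p) n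
  have hst : ∀ n, st (n + 1) = F (st n) := fun n => rfl
  let Q : ℕ → ℝ := fun n => ((st n).1.1 : ℝ)
  have hQX : ∀ n, X0 ≤ Q n := fun n => (st n).2.RX
  have hQ2 : ∀ n, 2 * Q n ≤ Q (n + 1) := fun n => by simp only [Q, hst]; exact hF2 _
  have hQ1 : ∀ n, 1 ≤ Q n := fun n => P.X1.trans (hQX n)
  have hQ4 : ∀ n, Q (n + 1) ≤ M' * Q n ^ 4 := fun n => by simp only [Q, hst]; exact hF3 _
  have hQn : ∀ n, (2:ℝ) ^ n ≤ Q n := by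
    intro n
    induction n with
    | zero => simpa using hQ1 0
    | succ n ih => rw [pow_succ]; linarith [hQ2 n]
  have hQi : ∀ n, 1 / Q n ≤ (1 / 2) ^ n := by
    intro n
    rw [one_div_pow]
    exact one_div_le_one_div_of_le (by positivity) (hQn n)
  let g : ℕ → ℝ → ℝ := fun n => (st (n + 1)).1.2.2.2
  have hS := fun n => (st (n + 1)).2
  have hD : ∀ n, ∀ x : ℝ, |x - round x| ≤ (1 - η / 8) / 2 * (st (n + 1)).1.2.1 →
        1 / NN ω (g n) (st (n + 1)).1.1 x ≤ Real.exp (1 - √(Q n)) := fun n => hF4 (st n)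
  have hgn : ∀ n, g (n + 1) = stepf ω (g n) (st (n + 1)).1.2.2.1 (√(Q (n + 1))) (st (n + 1)).1.1 :=
    fun n => hF1 (st (n + 1))
  have hQle : ∀ n, Q n ≤ Q (n + 1) := fun n => by linarith [hQ1 n, hQ2 n]
  have hstep : ∀ n, ContDiff ℝ l (fun x => wOf ω (g (n + 1)) x - wOf ω (g n) x) ∧
      ∀ m ≤ l, ∀ x, |iteratedDeriv m (fun x => wOf ω (g (n + 1)) x - wOf ω (g n) x) x| ≤
        (1 / 2) ^ n := by
    intro n
    have hk : √(Q (n + 1)) ≤ 2 * (Q (n + 1) + 1) * (1 - η / 2) := by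
      have a1 : √(Q (n + 1)) ≤ Q (n + 1) := by
        rw [Real.sqrt_le_left (by linarith [hQ1 (n + 1)])]; nlinarith [hQ1 (n + 1)]
      nlinarith [P.η1, hQ1 (n + 1)]
    obtain ⟨-, h2, h3⟩ := Stage.wd P (hS n) (Real.sqrt_nonneg _) hk (hQX n) (hQle n) (hQ4 n) (hD n)
    rw [hgn n]
    exact ⟨h2, fun m hm x => (h3 m hm x).trans (hQi n)⟩
  have hwC : ∀ n, ContDiff ℝ l (wOf ω (g n)) := fun n => wOf_contDiff (hS n).fd.1 (hS n).fpos
  have hwP : ∀ n, Function.Periodic (wOf ω (g n)) 1 := fun n => wOf_periodic (hS n).fp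
  obtain ⟨v, hv, hlim, hvn⟩ := series_limit (w := fun n => wOf ω (g n)) (hwC 0)
    (fun n => (hstep n).1) fun n => (hstep n).2
  have hvp : Function.Periodic v 1 := by
    intro x
    have h1 := hlim (x + 1)
    simp only [hwP _ x] at h1
    exact tendsto_nhds_unique h1 (hlim x)
  refine ⟨v, hvp, hv, ?_, ?_⟩
  · obtain ⟨L, hL⟩ := LE_exists (ω := ω) hv.continuous hvp
    refine ⟨L, ?_, hL⟩
    obtain ⟨C, hC⟩ : ∃ C, ∀ x, |v x| ≤ C := by
      obtain ⟨C, hC⟩ := (isCompact_Icc (a := (0:ℝ)) (b := 1)).exists_bound_of_continuousOn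
        hv.continuous.continuousOn
      refine ⟨C, fun x => ?_⟩
      obtain ⟨y, hy, hxy⟩ := hvp.exists_mem_Ico₀ one_pos x
      rw [hxy]; exact hC y ⟨hy.1, hy.2.le⟩
    have hge : ∀ n : ℕ, 1 ≤ n → 1 / 2 ≤ LEn ω (SchrodingerCocycle v) n := by
      intro n hn
      refine LEn_limit (w := fun k => wOf ω (g k)) (K := C + 2) (fun k => (hwC k).continuous) ?_ hlim ?_
      · intro k x
        have h1 := (hvn k).2 0 (Nat.zero_le _) x
        rw [iteratedDeriv_zero] at h1
        have h2 : ((1:ℝ) / 2) ^ k ≤ 1 := pow_le_one₀ (by norm_num) (by norm_num)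
        have h3 := hC x
        rw [abs_le] at *
        constructor <;> linarith
      · intro k
        exact (Stage.sge P (hS k)).trans (LEn_ge (hS k).fpos (hS k).fc (hS k).fp hn)
    have : 1 / 2 ≤ L := ge_of_tendsto hL (eventually_atTop.2 ⟨1, hge⟩)
    linarith
  · intro δ hδ
    obtain ⟨n, hn⟩ := exists_pow_lt_of_lt_one (show 0 < δ / 3 by positivity)
      (show (1 / 2 : ℝ) < 1 by norm_num)
    obtain ⟨w, h1, h2, h3, h4, h5⟩ := Stage.zero P (hS n) (hQX n) (hQle n) (hQ4 n) (hD n)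
    refine ⟨w, h1, h2, fun j hj x => ?_, h5⟩
    have e : (fun y => w y - v y) = (fun y => w y - wOf ω (g n) y) - fun y => v y - wOf ω (g n) y := by
      funext y; simp
    have hj' : (j : WithTop ℕ∞) ≤ (l : WithTop ℕ∞) := by exact_mod_cast hj
    rw [e, iteratedDeriv_sub ((h3.of_le hj').contDiffAt) (((hvn n).1.of_le hj').contDiffAt)]
    have a1 := (h4 j hj x).trans (hQi n)
    have a2 := (hvn n).2 j hj x
    refine (abs_sub _ _).trans_lt ?_
    linarith
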